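/- arXiv:1612.04861 — 2 statements merged into one kernel-verified Lean document; each statement's English description precedes it below -/
import Mathlib

section
/- Let P and Q be finite sets of points in the plane (possibly containing collinear triples), each of cardinality n, each not contained in a line, such that P and Q have the same number k of internal points, where k = 1 or k = 2. Then there exist a triangulation T_P of P and a triangulation T_Q of Q that are compatible. -/
open Set

/-- Points of the plane. -/
abbrev Pt : Type := ℝ × ℝ

noncomputable section

/-- The determinant of two plane vectors. -/
def det2 (u v : Pt) : ℝ := u.1 * v.2 - u.2 * v.1

/-- A triple `(a,b,c)` of points is clockwise-ordered if `det (b-a, c-a) < 0`. -/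
def Clockwise (a b c : Pt) : Prop := det2 (b - a) (c - a) < 0

/-- The closed segments `[a,b]` and `[c,d]` cross: they intersect in a point that is not a
common endpoint of the two segments. -/
def Crosses (a b c d : Pt) : Prop :=
  ∃ x : Pt, x ∈ segment ℝ a b ∧ x ∈ segment ℝ c d ∧
    ¬((x = a ∨ x = b) ∧ (x = c ∨ x = d))

/-- `T` is a set of unordered pairs of distinct points of `P` whose corresponding
segments are pairwise non-crossing. -/
def ValidSegs (P : Finset Pt) (T : Set (Sym2 Pt)) : Prop :=
  (∀ e ∈ T, ∃ a b : Pt, a ∈ P ∧ b ∈ P ∧ a ≠ b ∧ e = s(a, b)) ∧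
  (∀ a b c d : Pt, s(a, b) ∈ T → s(c, d) ∈ T → s(a, b) ≠ s(c, d) → ¬ Crosses a b c d)

/-- A triangulation of `P`: a maximal (w.r.t. inclusion) set of unordered pairs of distinct
points of `P`, no two of whose segments cross. -/
def IsTriangulation (P : Finset Pt) (T : Set (Sym2 Pt)) : Prop :=
  ValidSegs P T ∧ ∀ T' : Set (Sym2 Pt), ValidSegs P T' → T ⊆ T' → T' = T

/-- A convex hull point of `P`: a point of `P` on the boundary of `conv P`. -/
def HullPoint (P : Finset Pt) (p : Pt) : Prop :=
  p ∈ P ∧ p ∈ frontier (convexHull ℝ (P : Set Pt))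

/-- An internal point of `P`: a point of `P` in the interior of `conv P`. -/
def InternalPoint (P : Finset Pt) (p : Pt) : Prop :=
  p ∈ P ∧ p ∈ interior (convexHull ℝ (P : Set Pt))

/-- The number of convex hull points of `P`. -/
def hullCount (P : Finset Pt) : ℕ := {p : Pt | HullPoint P p}.ncard

/-- The number of internal points of `P`. -/
def internalCount (P : Finset Pt) : ℕ := {p : Pt | InternalPoint P p}.ncard

/-- The open triangle with vertices `a`, `b`, `c`. -/
def openTriangle (a b c : Pt) : Set Pt := interior (convexHull ℝ ({a, b, c} : Set Pt))

/-- `(a,b,c)` is a triangle of the triangulation `T` of `P`: the three points are distinct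
points of `P`, the three pairs are in `T`, and the open triangle `abc` contains no point of
`P` and meets no segment of `T`. -/
def IsTriangleOf (P : Finset Pt) (T : Set (Sym2 Pt)) (a b c : Pt) : Prop :=
  a ∈ P ∧ b ∈ P ∧ c ∈ P ∧ a ≠ b ∧ b ≠ c ∧ a ≠ c ∧
  s(a, b) ∈ T ∧ s(b, c) ∈ T ∧ s(a, c) ∈ T ∧
  (∀ p ∈ P, p ∉ openTriangle a b c) ∧
  (∀ u v : Pt, s(u, v) ∈ T → ∀ x ∈ segment ℝ u v, x ∉ openTriangle a b c)

/-- Triangulations `TP` of `P` and `TQ` of `Q` are compatible via the bijection `φ : P → Q`: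
`(a,b,c)` is a clockwise-ordered triangle of `TP` iff `(φ a, φ b, φ c)` is a
clockwise-ordered triangle of `TQ`. -/
def CompatibleVia (P Q : Finset Pt) (TP TQ : Set (Sym2 Pt)) (φ : Pt → Pt) : Prop :=
  Set.BijOn φ (P : Set Pt) (Q : Set Pt) ∧
  ∀ a b c : Pt, a ∈ P → b ∈ P → c ∈ P →
    ((IsTriangleOf P TP a b c ∧ Clockwise a b c) ↔
     (IsTriangleOf Q TQ (φ a) (φ b) (φ c) ∧ Clockwise (φ a) (φ b) (φ c)))

/-- Triangulations `TP` of `P` and `TQ` of `Q` are compatible. -/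
def Compatible (P Q : Finset Pt) (TP TQ : Set (Sym2 Pt)) : Prop :=
  ∃ φ : Pt → Pt, CompatibleVia P Q TP TQ φ

/-- The degree of a point `p` in a triangulation `T`: the number of pairs of `T`
containing `p`. -/
def degreeIn (T : Set (Sym2 Pt)) (p : Pt) : ℕ := {e ∈ T | p ∈ e}.ncard

/-- `P` is in general position: no three points of `P` are collinear. -/
def GenPos (P : Finset Pt) : Prop :=
  ∀ a b c : Pt, a ∈ P → b ∈ P → c ∈ P → a ≠ b → b ≠ c → a ≠ c →
    ¬ Collinear ℝ ({a, b, c} : Set Pt)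

end

/-!
Walking around `conv P` through all points of `P` on its boundary gives a cycle, in which
consecutive edges may be collinear. If `P` has one internal point `q`, joining `q` to this cycle
triangulates `P` as a wheel, whose combinatorial type depends only on the number of points.

If there are two internal points `p` and `q`, the line `pq` strictly separates two boundary points
`h 0` and `h 2` at distance two along the cycle; two steps are needed since the point `h 1` may lie
on the line. Exchanging `p` and `q` if necessary, `h 0` is on the right and `h 2` on the left of the
ray from `q` through `p`. So in the wheel with hub `q` the point `p` can be inserted into the
quadrilateral `q, h 0, h 1, h 2` and joined to its four corners; although the quadrilateral may be
reflex at `q`, the four triangles around `p` are positively oriented. Again the combinatorial type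
depends only on the number of points.

Such a family of triangles is seen to dissect `conv P` by counting: the winding numbers of
positively oriented triangles around a point are `0` or `1`, and their sum is the winding number of
the boundary cycle, because inner edges cancel. Any dissection into triangles without further points
of `P` is a triangulation, so two drawings of the same combinatorial type are compatible.
-/

section Segments

variable {E : Type*} [AddCommGroup E] [Module ℝ E]

theorem exists_lineMap_mem_of_isOpen [TopologicalSpace E] [IsTopologicalAddGroup E]
    [ContinuousSMul ℝ E] {U : Set E} (hU : IsOpen U) {x : E} (hx : x ∈ U) (w : E) :
    ∃ e ∈ Ioo (0 : ℝ) 1, AffineMap.lineMap x w e ∈ U := by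
  have hcont : Continuous fun e : ℝ => AffineMap.lineMap x w e := AffineMap.lineMap_continuous
  have hU : ∀ᶠ e in nhdsWithin (0 : ℝ) (Ioi 0), AffineMap.lineMap x w e ∈ U :=
    (hcont.continuousAt.eventually_mem (hU.mem_nhds (by simpa))).filter_mono nhdsWithin_le_nhds
  obtain ⟨e, he, he01⟩ := (hU.and (Ioo_mem_nhdsGT one_pos)).exists
  exact ⟨e, he01, he⟩

theorem sym2_eq_of_real_openSegments_meet {a b c d x : ℝ} (hx : x ∈ openSegment ℝ a b)
    (hx' : x ∈ openSegment ℝ c d) (ha : a ∉ openSegment ℝ c d) (hb : b ∉ openSegment ℝ c d)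
    (hc : c ∉ openSegment ℝ a b) (hd : d ∉ openSegment ℝ a b) : s(a, b) = s(c, d) := by
  wlog hab : a ≤ b generalizing a b
  · rw [Sym2.eq_swap]
    rw [openSegment_symm ℝ a b] at hx hc hd
    exact this hx hb ha hc hd (le_of_not_ge hab)
  wlog hcd : c ≤ d generalizing c d
  · rw [Sym2.eq_swap (a := c)]
    rw [openSegment_symm ℝ c d] at hx' ha hb
    exact this hx' ha hb hd hc (le_of_not_ge hcd)
  rcases hab.eq_or_lt with rfl | hab
  · rw [openSegment_same, mem_singleton_iff] at hx
    exact absurd (hx ▸ hx') ha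
  rcases hcd.eq_or_lt with rfl | hcd
  · rw [openSegment_same, mem_singleton_iff] at hx'
    exact absurd (hx' ▸ hx) hc
  simp only [openSegment_eq_Ioo hab, openSegment_eq_Ioo hcd, mem_Ioo, not_and, not_lt] at *
  obtain ⟨rfl, rfl⟩ : a = c ∧ b = d := by
    constructor <;> apply le_antisymm <;> by_contra! h <;> grind
  rfl

theorem sym2_eq_of_openSegments_meet {a b c d x : E} (hab : a ≠ b) (hcl : c ∈ line[ℝ, a, b])
    (hdl : d ∈ line[ℝ, a, b]) (hx : x ∈ openSegment ℝ a b) (hx' : x ∈ openSegment ℝ c d)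
    (ha : a ∉ openSegment ℝ c d) (hb : b ∉ openSegment ℝ c d)
    (hc : c ∉ openSegment ℝ a b) (hd : d ∉ openSegment ℝ a b) : s(a, b) = s(c, d) := by
  obtain ⟨γ, rfl⟩ := mem_affineSpan_pair_iff_exists_lineMap_eq.1 hcl
  obtain ⟨δ, rfl⟩ := mem_affineSpan_pair_iff_exists_lineMap_eq.1 hdl
  have hinj := AffineMap.lineMap_injective ℝ hab
  set f : ℝ →ᵃ[ℝ] E := AffineMap.lineMap a b
  have hfa : f 0 = a := AffineMap.lineMap_apply_zero a b
  have hfb : f 1 = b := AffineMap.lineMap_apply_one a b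
  rw [← hfa, ← hfb, ← image_openSegment] at hx hc hd
  rw [← hfa, ← image_openSegment, hinj.mem_set_image] at ha
  rw [← hfb, ← image_openSegment, hinj.mem_set_image] at hb
  rw [hinj.mem_set_image] at hc hd
  obtain ⟨_, hx, rfl⟩ := hx
  rw [← image_openSegment, hinj.mem_set_image] at hx'
  rw [← hfa, ← hfb, ← Sym2.map_mk, ← Sym2.map_mk,
    sym2_eq_of_real_openSegments_meet hx hx' ha hb hc hd]

end Segments

section Orientation

/-- Twice the signed area of the triangle `abc`, positive when `a`, `b`, `c` is a counterclockwise
triple. As a function of `c` it is the affine form that vanishes on the line `ab`. -/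
def orient (a b c : Pt) : ℝ := det2 (b - a) (c - a)

variable {a b c u v x : Pt}

theorem orient_eq (a b c : Pt) :
    orient a b c = (b.1 - a.1) * (c.2 - a.2) - (b.2 - a.2) * (c.1 - a.1) := rfl

theorem orient_rotate (a b c : Pt) : orient b c a = orient a b c := by
  simp only [orient_eq]; ring

theorem orient_swap (a b c : Pt) : orient b a c = -orient a b c := by
  simp only [orient_eq]; ring

theorem orient_swap_right (a b c : Pt) : orient a c b = -orient a b c := by
  simp only [orient_eq]; ring

@[simp] theorem orient_self_left (a b : Pt) : orient a a b = 0 := by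
  simp only [orient_eq]; ring

@[simp] theorem orient_self_outer (a b : Pt) : orient a b a = 0 := by
  simp only [orient_eq]; ring

@[simp] theorem orient_self_right (a b : Pt) : orient a b b = 0 := by
  simp only [orient_eq]; ring

theorem clockwise_iff_orient_pos : Clockwise a b c ↔ 0 < orient a c b := by
  rw [orient_swap_right, Left.neg_pos_iff]; rfl

theorem ne_of_orient_pos (h : 0 < orient a b c) : a ≠ b ∧ b ≠ c ∧ a ≠ c := by
  refine ⟨?_, ?_, ?_⟩ <;> rintro rfl <;> simp at h

theorem orient_combo (u v a b : Pt) {s t : ℝ} (h : s + t = 1) :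
    orient u v (s • a + t • b) = s * orient u v a + t * orient u v b := by
  obtain rfl : s = 1 - t := by linarith
  simp only [orient_eq, Prod.fst_add, Prod.snd_add, Prod.smul_fst, Prod.smul_snd, smul_eq_mul]
  ring

theorem orient_lineMap (u v a b : Pt) (t : ℝ) :
    orient u v (AffineMap.lineMap a b t) = (1 - t) * orient u v a + t * orient u v b := by
  rw [AffineMap.lineMap_apply_module, orient_combo _ _ _ _ (by ring)]

theorem orient_add_orient_add_orient (a b c x : Pt) :
    orient b c x + orient c a x + orient a b x = orient a b c := by
  simp only [orient_eq]; ring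

theorem barycentric_eq (h : orient a b c ≠ 0) (x : Pt) :
    (orient b c x / orient a b c) • a + (orient c a x / orient a b c) • b
      + (orient a b x / orient a b c) • c = x := by
  have hsmul : orient b c x • a + orient c a x • b + orient a b x • c = orient a b c • x := by
    ext <;> simp only [orient_eq, Prod.fst_add, Prod.snd_add, Prod.smul_fst, Prod.smul_snd,
      smul_eq_mul] <;> ring
  simp only [div_eq_inv_mul, mul_smul, ← smul_add]
  rw [hsmul, inv_smul_smul₀ h]

theorem barycentric_sum (h : orient a b c ≠ 0) (x : Pt) :
    orient b c x / orient a b c + orient c a x / orient a b c + orient a b x / orient a b c =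
      1 := by
  rw [← add_div, ← add_div, orient_add_orient_add_orient, div_self h]

@[fun_prop] theorem continuous_orient (u v : Pt) : Continuous (orient u v) := by
  simp only [funext (orient_eq u v)]; fun_prop

theorem convex_setOf_orient_nonneg (u v : Pt) : Convex ℝ {x | 0 ≤ orient u v x} := by
  intro y hy z hz s t hs ht hst
  rw [mem_ofPred_eq] at hy hz ⊢
  rw [orient_combo _ _ _ _ hst]
  positivity

theorem orient_nonneg_of_mem_convexHull {S : Set Pt} (h : ∀ z ∈ S, 0 ≤ orient u v z)
    (hx : x ∈ convexHull ℝ S) : 0 ≤ orient u v x :=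
  convexHull_min h (convex_setOf_orient_nonneg u v) hx

-- Moving from `x` by a small multiple of the normal of `uv` would leave the half-plane.
theorem orient_pos_of_mem_interior {S : Set Pt} (huv : u ≠ v) (h : ∀ z ∈ S, 0 ≤ orient u v z)
    (hx : x ∈ interior S) : 0 < orient u v x := by
  refine (h x (interior_subset hx)).lt_of_ne' fun h0 => ?_
  let w : Pt := x + (v.2 - u.2, u.1 - v.1)
  have hw : orient u v w < 0 := by
    have hval : orient u v w = orient u v x - ((v.1 - u.1) ^ 2 + (v.2 - u.2) ^ 2) := by
      simp only [orient_eq, w, Prod.fst_add, Prod.snd_add]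
      ring
    rw [hval, h0, zero_sub, neg_lt_zero]
    contrapose! huv
    ext <;> nlinarith [sq_nonneg (v.1 - u.1), sq_nonneg (v.2 - u.2)]
  obtain ⟨e, ⟨he, -⟩, heS⟩ := exists_lineMap_mem_of_isOpen isOpen_interior hx w
  have hval := h _ (interior_subset heS)
  rw [orient_lineMap, h0] at hval
  nlinarith

theorem mem_line_of_orient_eq_zero (h : orient a b c ≠ 0) (h0 : orient a b x = 0) :
    x ∈ line[ℝ, a, b] := by
  rw [mem_affineSpan_pair_iff_exists_lineMap_eq]
  refine ⟨orient c a x / orient a b c, ?_⟩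
  have hsum := barycentric_sum h x
  have hx := barycentric_eq h x
  rw [h0, zero_div, add_zero] at hsum
  rw [h0, zero_div, zero_smul, add_zero] at hx
  rw [AffineMap.lineMap_apply_module, ← eq_sub_of_add_eq hsum, hx]

end Orientation

section ClosedTriangle

/-- The closed triangle with vertices `a`, `b`, `c`. -/
def closedTriangle (a b c : Pt) : Set Pt := convexHull ℝ {a, b, c}

variable {a b c x y : Pt}

theorem openTriangle_eq_interior (a b c : Pt) :
    openTriangle a b c = interior (closedTriangle a b c) := rfl

theorem closedTriangle_rotate (a b c : Pt) : closedTriangle b c a = closedTriangle a b c := by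
  rw [closedTriangle, closedTriangle, pair_comm c a, insert_comm b a]

theorem openTriangle_rotate (a b c : Pt) : openTriangle b c a = openTriangle a b c :=
  congrArg interior (closedTriangle_rotate a b c)

theorem openTriangle_swap_right (a b c : Pt) : openTriangle a c b = openTriangle a b c := by
  rw [openTriangle, openTriangle, pair_comm]

theorem convex_closedTriangle (a b c : Pt) : Convex ℝ (closedTriangle a b c) :=
  convex_convexHull ℝ _

theorem vertices_subset_closedTriangle (a b c : Pt) : {a, b, c} ⊆ closedTriangle a b c :=
  subset_convexHull ℝ _

theorem segment_subset_closedTriangle (a b c : Pt) : segment ℝ a b ⊆ closedTriangle a b c :=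
  segment_subset_convexHull (by simp) (by simp)

theorem isClosed_closedTriangle (a b c : Pt) : IsClosed (closedTriangle a b c) :=
  (toFinite {a, b, c}).isClosed_convexHull ℝ

theorem openTriangle_subset_closedTriangle (a b c : Pt) :
    openTriangle a b c ⊆ closedTriangle a b c := interior_subset

theorem mem_closedTriangle_iff (h : 0 < orient a b c) :
    x ∈ closedTriangle a b c ↔ 0 ≤ orient a b x ∧ 0 ≤ orient b c x ∧ 0 ≤ orient c a x := by
  have hbc : 0 < orient b c a := by rwa [orient_rotate]
  have hca : 0 < orient c a b := by rwa [orient_rotate, orient_rotate]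
  constructor
  · refine fun hx => ⟨?_, ?_, ?_⟩ <;> refine orient_nonneg_of_mem_convexHull ?_ hx <;>
      simp [h.le, hbc.le, hca.le]
  · rintro ⟨h1, h2, h3⟩
    have hmem := (convex_closedTriangle a b c).sum_mem (t := Finset.univ)
      (w := ![orient b c x / orient a b c, orient c a x / orient a b c,
        orient a b x / orient a b c]) (z := ![a, b, c])
      (by simp [Fin.forall_fin_succ, div_nonneg, *, h.le])
      (by simpa [Fin.sum_univ_three] using barycentric_sum h.ne' x)
      (by simpa [Fin.forall_fin_succ, insert_subset_iff] using vertices_subset_closedTriangle a b c)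
    simpa [Fin.sum_univ_three, barycentric_eq h.ne' x] using hmem

theorem mem_closedTriangle_iff_apex (h : 0 < orient a b c) :
    x ∈ closedTriangle a b c ↔ orient a x b ≤ 0 ∧ 0 ≤ orient b c x ∧ 0 ≤ orient a x c := by
  rw [mem_closedTriangle_iff h, orient_swap_right a x b, neg_nonneg, orient_rotate x c a,
    orient_rotate a x c]

theorem mem_openTriangle_iff (h : 0 < orient a b c) :
    x ∈ openTriangle a b c ↔ 0 < orient a b x ∧ 0 < orient b c x ∧ 0 < orient c a x := by
  have hclosed := fun y (hy : y ∈ closedTriangle a b c) => (mem_closedTriangle_iff h).1 hy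
  obtain ⟨hab, hbc, hac⟩ := ne_of_orient_pos h
  constructor
  · intro hx
    exact ⟨orient_pos_of_mem_interior hab (fun y hy => (hclosed y hy).1) hx,
      orient_pos_of_mem_interior hbc (fun y hy => (hclosed y hy).2.1) hx,
      orient_pos_of_mem_interior hac.symm (fun y hy => (hclosed y hy).2.2) hx⟩
  · refine fun hx => interior_maximal (t := {y | 0 < orient a b y ∧ 0 < orient b c y ∧
      0 < orient c a y}) (fun y hy => (mem_closedTriangle_iff h).2
        ⟨hy.1.le, hy.2.1.le, hy.2.2.le⟩) ?_ hx
    exact (isOpen_lt continuous_const (continuous_orient a b)).inter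
      ((isOpen_lt continuous_const (continuous_orient b c)).inter
        (isOpen_lt continuous_const (continuous_orient c a)))

theorem openTriangle_nonempty (h : 0 < orient a b c) : (openTriangle a b c).Nonempty := by
  refine ⟨AffineMap.lineMap a (AffineMap.lineMap b c (1 / 2 : ℝ)) (1 / 2 : ℝ),
    (mem_openTriangle_iff h).2 ?_⟩
  norm_num [orient_lineMap, orient_rotate, h]

theorem closure_openTriangle (h : 0 < orient a b c) :
    closure (openTriangle a b c) = closedTriangle a b c := by
  rw [openTriangle_eq_interior,
    (convex_closedTriangle a b c).closure_interior_eq_closure_of_nonempty_interior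
      (openTriangle_nonempty h), (isClosed_closedTriangle a b c).closure_eq]

theorem orient_eq_zero_of_mem_segment (hx : x ∈ segment ℝ a b) : orient a b x = 0 := by
  obtain ⟨s, t, -, -, hst, rfl⟩ := hx
  simp [orient_combo _ _ _ _ hst]

theorem mem_segment_of_orient_eq_zero (h : 0 < orient a b c) (hx : x ∈ closedTriangle a b c)
    (h0 : orient a b x = 0) : x ∈ segment ℝ a b := by
  obtain ⟨-, h1, h2⟩ := (mem_closedTriangle_iff h).1 hx
  exact ⟨orient b c x / orient a b c, orient c a x / orient a b c, by positivity, by positivity,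
    by simpa [h0] using barycentric_sum h.ne' x, by simpa [h0] using barycentric_eq h.ne' x⟩

theorem disjoint_openTriangle_segment (h : 0 < orient a b c) :
    Disjoint (openTriangle a b c) (segment ℝ a b) :=
  disjoint_left.2 fun _ hx hx' =>
    ((mem_openTriangle_iff h).1 hx).1.ne' (orient_eq_zero_of_mem_segment hx')

theorem mem_openTriangle_or_mem_segment (h : 0 < orient a b c) (hx : x ∈ closedTriangle a b c) :
    x ∈ openTriangle a b c ∨ x ∈ segment ℝ a b ∨ x ∈ segment ℝ b c ∨ x ∈ segment ℝ c a := by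
  have hbc : 0 < orient b c a := by rwa [orient_rotate]
  have hca : 0 < orient c a b := by rwa [orient_rotate, orient_rotate]
  obtain ⟨h1, h2, h3⟩ := (mem_closedTriangle_iff h).1 hx
  rcases h1.eq_or_lt' with h1 | h1
  · exact .inr (.inl (mem_segment_of_orient_eq_zero h hx h1))
  rcases h2.eq_or_lt' with h2 | h2
  · exact .inr (.inr (.inl (mem_segment_of_orient_eq_zero hbc
      (by rwa [closedTriangle_rotate]) h2)))
  rcases h3.eq_or_lt' with h3 | h3
  · exact .inr (.inr (.inr (mem_segment_of_orient_eq_zero hca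
      (by rwa [closedTriangle_rotate, closedTriangle_rotate]) h3)))
  exact .inl ((mem_openTriangle_iff h).2 ⟨h1, h2, h3⟩)

theorem exists_mem_openTriangle_of_transversal (habc : 0 < orient a b c)
    (hx : x ∈ openSegment ℝ a b) (hy : 0 < orient a b y) :
    ∃ e ∈ Ioo (0 : ℝ) 1, AffineMap.lineMap x y e ∈ openTriangle a b c := by
  obtain ⟨s, t, hs, ht, hst, rfl⟩ := hx
  have hopen : IsOpen {q | 0 < orient b c q ∧ 0 < orient c a q} :=
    (isOpen_lt continuous_const (continuous_orient b c)).inter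
      (isOpen_lt continuous_const (continuous_orient c a))
  obtain ⟨e, he, hbc, hca⟩ := exists_lineMap_mem_of_isOpen hopen (x := s • a + t • b) (by
    simp [orient_combo _ _ _ _ hst, orient_rotate, habc, hs, ht]) y
  refine ⟨e, he, (mem_openTriangle_iff habc).2 ⟨?_, hbc, hca⟩⟩
  simpa [orient_lineMap, orient_combo _ _ _ _ hst, hy] using he.1

end ClosedTriangle

section Mesh

/-- A combinatorial family of triangles with vertices in `V`: the triangle with index `i` has the
corners `a i`, `b i`, `c i`, listed counterclockwise. -/
structure TriFamily (ι V : Type*) where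
  a : ι → V
  b : ι → V
  c : ι → V

namespace TriFamily

variable {ι V W : Type*}

/-- The image of a triangle family under a map of its vertices. -/
def map (t : TriFamily ι V) (g : V → W) : TriFamily ι W := ⟨g ∘ t.a, g ∘ t.b, g ∘ t.c⟩

/-- The triple `(x, y, z)` is a triangle of the family up to a rotation. -/
def HasTriangle (t : TriFamily ι V) (x y z : V) : Prop :=
  ∃ i, (t.a i = x ∧ t.b i = y ∧ t.c i = z) ∨ (t.b i = x ∧ t.c i = y ∧ t.a i = z) ∨
    (t.c i = x ∧ t.a i = y ∧ t.b i = z)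

/-- The unordered sides of the triangles of a family. -/
def edges (t : TriFamily ι V) : Set (Sym2 V) := {e | ∃ x y z, t.HasTriangle x y z ∧ e = s(x, y)}

/-- The closed triangle with index `i` of a family of triangles in the plane. -/
def closedCell (t : TriFamily ι Pt) (i : ι) : Set Pt := closedTriangle (t.a i) (t.b i) (t.c i)

/-- The open triangle with index `i` of a family of triangles in the plane. -/
def openCell (t : TriFamily ι Pt) (i : ι) : Set Pt := openTriangle (t.a i) (t.b i) (t.c i)

variable {t : TriFamily ι V} {x y z u v : V}

theorem hasTriangle_cell (t : TriFamily ι V) (i : ι) : t.HasTriangle (t.a i) (t.b i) (t.c i) :=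
  ⟨i, .inl ⟨rfl, rfl, rfl⟩⟩

theorem HasTriangle.rotate (h : t.HasTriangle x y z) : t.HasTriangle y z x := by
  obtain ⟨i, h⟩ := h
  exact ⟨i, by tauto⟩

theorem hasTriangle_map_iff {g : V → W} (hg : g.Injective) :
    (t.map g).HasTriangle (g x) (g y) (g z) ↔ t.HasTriangle x y z := by
  simp only [HasTriangle, map, Function.comp_apply, hg.eq_iff]

theorem HasTriangle.mk_mem_edges (h : t.HasTriangle x y z) (hu : u = x ∨ u = y ∨ u = z)
    (hv : v = x ∨ v = y ∨ v = z) (huv : u ≠ v) : s(u, v) ∈ t.edges := by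
  have hxy : s(x, y) ∈ t.edges := ⟨x, y, z, h, rfl⟩
  have hyz : s(y, z) ∈ t.edges := ⟨y, z, x, h.rotate, rfl⟩
  have hzx : s(z, x) ∈ t.edges := ⟨z, x, y, h.rotate.rotate, rfl⟩
  rcases hu with rfl | rfl | rfl <;> rcases hv with rfl | rfl | rfl <;>
    first | contradiction | assumption | (rw [Sym2.eq_swap]; assumption)

theorem HasTriangle.exists_cell {t : TriFamily ι Pt} {x y z : Pt} (h : t.HasTriangle x y z) :
    ∃ i, closedTriangle x y z = t.closedCell i ∧ orient x y z = orient (t.a i) (t.b i) (t.c i) ∧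
      ({x, y, z} : Set Pt) = {t.a i, t.b i, t.c i} := by
  obtain ⟨i, ⟨rfl, rfl, rfl⟩ | ⟨rfl, rfl, rfl⟩ | ⟨rfl, rfl, rfl⟩⟩ := h
  · exact ⟨i, rfl, rfl, rfl⟩
  · exact ⟨i, closedTriangle_rotate _ _ _, orient_rotate _ _ _,
      by rw [pair_comm, insert_comm]⟩
  · exact ⟨i, (closedTriangle_rotate _ _ _).symm, (orient_rotate _ _ _).symm,
      by rw [insert_comm, pair_comm (t.c i)]⟩

end TriFamily

/-- A family of triangles dissects the convex hull of `P` into positively oriented triangles with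
vertices in `P` that contain no further points of `P`. -/
structure IsMesh {ι : Type*} (P : Finset Pt) (t : TriFamily ι Pt) : Prop where
  mem : ∀ i, {t.a i, t.b i, t.c i} ⊆ (P : Set Pt)
  pos : ∀ i, 0 < orient (t.a i) (t.b i) (t.c i)
  empty : ∀ i, ∀ p ∈ P, p ∈ t.closedCell i → p ∈ ({t.a i, t.b i, t.c i} : Set Pt)
  cover : convexHull ℝ (P : Set Pt) ⊆ ⋃ i, t.closedCell i
  disj : Pairwise fun i j => Disjoint (t.openCell i) (t.openCell j)

theorem segment_congr {a b c d : Pt} (h : s(a, b) = s(c, d)) : segment ℝ a b = segment ℝ c d := by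
  rcases Sym2.eq_iff.1 h with ⟨rfl, rfl⟩ | ⟨rfl, rfl⟩
  · rfl
  · exact segment_symm ℝ a b

theorem crosses_congr {a b c d a' b' c' d' : Pt} (h : s(a, b) = s(a', b'))
    (h' : s(c, d) = s(c', d')) : Crosses a b c d ↔ Crosses a' b' c' d' := by
  simp only [Crosses, ← Sym2.mem_iff, h, h', segment_congr h, segment_congr h']

theorem IsTriangleOf.swap_right {P : Finset Pt} {T : Set (Sym2 Pt)} {x y z : Pt}
    (h : IsTriangleOf P T x y z) : IsTriangleOf P T x z y := by
  obtain ⟨hx, hy, hz, hxy, hyz, hxz, exy, eyz, exz, hP, hT⟩ := h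
  rw [← openTriangle_swap_right] at hP hT
  exact ⟨hx, hz, hy, hxz, hyz.symm, hxy, exz, Sym2.eq_swap ▸ eyz, exy, hP, hT⟩

namespace IsMesh

variable {ι : Type*} {P : Finset Pt} {t : TriFamily ι Pt} {x y z x' y' z' p u v : Pt}

theorem vertices_subset (hM : IsMesh P t) (h : t.HasTriangle x y z) :
    {x, y, z} ⊆ (P : Set Pt) := by
  obtain ⟨i, -, -, hi⟩ := h.exists_cell
  exact hi ▸ hM.mem i

theorem orient_pos (hM : IsMesh P t) (h : t.HasTriangle x y z) : 0 < orient x y z := by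
  obtain ⟨i, -, hi, -⟩ := h.exists_cell
  exact hi ▸ hM.pos i

theorem eq_vertex (hM : IsMesh P t) (h : t.HasTriangle x y z) (hp : p ∈ P)
    (hpt : p ∈ closedTriangle x y z) : p = x ∨ p = y ∨ p = z := by
  obtain ⟨i, hcell, -, hset⟩ := h.exists_cell
  simpa [← hset] using hM.empty i p hp (hcell ▸ hpt)

theorem openTriangle_eq_of_meets (hM : IsMesh P t) (h : t.HasTriangle x y z)
    (h' : t.HasTriangle x' y' z') (hp : p ∈ openTriangle x y z)
    (hp' : p ∈ closedTriangle x' y' z') : openTriangle x y z = openTriangle x' y' z' := by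
  rw [← closure_openTriangle (hM.orient_pos h')] at hp'
  obtain ⟨i, hi, -⟩ := h.exists_cell
  obtain ⟨j, hj, -⟩ := h'.exists_cell
  replace hi : openTriangle x y z = t.openCell i := congrArg interior hi
  replace hj : openTriangle x' y' z' = t.openCell j := congrArg interior hj
  rw [hi] at hp ⊢
  rw [hj] at hp' ⊢
  obtain ⟨q, hq, hq'⟩ := mem_closure_iff.1 hp' _ isOpen_interior hp
  by_contra hne
  exact (hM.disj (mt (congrArg t.openCell) hne)).notMem_of_mem_left hq hq'

theorem disjoint_openTriangle_edge (hM : IsMesh P t) (h : t.HasTriangle x y z)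
    (huv : s(u, v) ∈ t.edges) : Disjoint (openTriangle x y z) (segment ℝ u v) := by
  obtain ⟨x', y', z', h', he⟩ := huv
  rw [segment_congr he]
  refine disjoint_left.2 fun p hp hp' => ?_
  rw [hM.openTriangle_eq_of_meets h h' hp (segment_subset_closedTriangle _ _ _ hp')] at hp
  exact (disjoint_openTriangle_segment (hM.orient_pos h')).notMem_of_mem_left hp hp'

theorem eq_or_eq_of_mem_segment (hM : IsMesh P t) (h : t.HasTriangle x y z) (hp : p ∈ P)
    (hps : p ∈ segment ℝ x y) : p = x ∨ p = y := by
  rcases hM.eq_vertex h hp (segment_subset_closedTriangle _ _ _ hps) with hp | hp | rfl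
  · exact .inl hp
  · exact .inr hp
  · exact absurd (orient_eq_zero_of_mem_segment hps) (hM.orient_pos h).ne'

theorem notMem_openSegment (hM : IsMesh P t) (h : t.HasTriangle x y z) (hp : p ∈ P) :
    p ∉ openSegment ℝ x y := by
  have hxy := (ne_of_orient_pos (hM.orient_pos h)).1
  intro hps
  rcases hM.eq_or_eq_of_mem_segment h hp (openSegment_subset_segment _ _ _ hps) with rfl | rfl
  · exact hxy (left_mem_openSegment_iff.1 hps)
  · exact hxy (right_mem_openSegment_iff.1 hps)

theorem edge_eq_of_openSegments_meet (hM : IsMesh P t) (h : t.HasTriangle x y z)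
    (h' : t.HasTriangle x' y' z') (hp : p ∈ openSegment ℝ x y) (hp' : p ∈ openSegment ℝ x' y') :
    s(x, y) = s(x', y') := by
  have hxyz := hM.orient_pos h
  have hP := hM.vertices_subset h
  have hP' := hM.vertices_subset h'
  simp only [insert_subset_iff, singleton_subset_iff, Finset.mem_coe] at hP hP'
  by_cases hcol : orient x y x' = 0 ∧ orient x y y' = 0
  · exact sym2_eq_of_openSegments_meet (ne_of_orient_pos hxyz).1
      (mem_line_of_orient_eq_zero hxyz.ne' hcol.1) (mem_line_of_orient_eq_zero hxyz.ne' hcol.2)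
      hp hp' (hM.notMem_openSegment h' hP.1) (hM.notMem_openSegment h' hP.2.1)
      (hM.notMem_openSegment h hP'.1) (hM.notMem_openSegment h hP'.2.1)
  exfalso
  obtain ⟨w, hw, hwpos⟩ : ∃ w ∈ segment ℝ x' y', 0 < orient x y w := by
    have h0 := orient_eq_zero_of_mem_segment (openSegment_subset_segment _ _ _ hp)
    obtain ⟨s, t, hs, ht, hst, rfl⟩ := hp'
    rw [orient_combo _ _ _ _ hst] at h0
    by_contra! hle
    have hx' := hle x' (left_mem_segment _ _ _)
    have hy' := hle y' (right_mem_segment _ _ _)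
    exact hcol ⟨by nlinarith, by nlinarith⟩
  obtain ⟨e, he, hopen⟩ := exists_mem_openTriangle_of_transversal hxyz hp hwpos
  refine (hM.disjoint_openTriangle_edge h ⟨x', y', z', h', rfl⟩).notMem_of_mem_left hopen ?_
  exact (convex_segment x' y').lineMap_mem (openSegment_subset_segment _ _ _ hp') hw
    ⟨he.1.le, he.2.le⟩

theorem validSegs (hM : IsMesh P t) : ValidSegs P t.edges := by
  constructor
  · rintro _ ⟨x, y, z, h, rfl⟩
    have hP := hM.vertices_subset h
    exact ⟨x, y, hP (by simp), hP (by simp), (ne_of_orient_pos (hM.orient_pos h)).1, rfl⟩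
  · rintro a b c d ⟨x, y, z, h, he⟩ ⟨x', y', z', h', he'⟩ hne
    rw [crosses_congr he he']
    rw [he, he'] at hne
    rintro ⟨p, hp, hp', hend⟩
    have hP := hM.vertices_subset h
    have hP' := hM.vertices_subset h'
    by_cases hpP : p ∈ P
    · exact hend ⟨hM.eq_or_eq_of_mem_segment h hpP hp, hM.eq_or_eq_of_mem_segment h' hpP hp'⟩
    have hneP : ∀ q ∈ (P : Set Pt), q ≠ p := fun q hq hqp => hpP (hqp ▸ hq)
    exact hne (hM.edge_eq_of_openSegments_meet h h'
      (mem_openSegment_of_ne_left_right (hneP _ (hP (by simp))) (hneP _ (hP (by simp))) hp)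
      (mem_openSegment_of_ne_left_right (hneP _ (hP' (by simp))) (hneP _ (hP' (by simp))) hp'))

-- Off the edges the open triangles coincide with the closed ones, so each of them is clopen there.
theorem exists_openTriangle_of_isPreconnected (hM : IsMesh P t) {s : Set Pt}
    (hs : IsPreconnected s) (hne : s.Nonempty) (hhull : s ⊆ convexHull ℝ (P : Set Pt))
    (hedge : ∀ u v, s(u, v) ∈ t.edges → Disjoint s (segment ℝ u v)) :
    ∃ x y z, t.HasTriangle x y z ∧ s ⊆ openTriangle x y z := by
  have hopen : ∀ i, ∀ p ∈ s, p ∈ t.closedCell i → p ∈ t.openCell i := by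
    intro i p hps hp
    have h := t.hasTriangle_cell i
    have hoff : ∀ {x y z}, t.HasTriangle x y z → p ∉ segment ℝ x y := fun {x y z} h =>
      (hedge x y ⟨x, y, z, h, rfl⟩).notMem_of_mem_left hps
    exact (mem_openTriangle_or_mem_segment (hM.pos i) hp).resolve_right
      (by simp only [hoff h, hoff h.rotate, hoff h.rotate.rotate, or_false, not_false_eq_true])
  obtain ⟨p, hp⟩ := hne
  obtain ⟨i, hi⟩ := mem_iUnion.1 (hM.cover (hhull hp))
  refine ⟨_, _, _, t.hasTriangle_cell i, hs.subset_left_of_subset_union isOpen_interior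
    (isClosed_closedTriangle (t.a i) (t.b i) (t.c i)).isOpen_compl
    (disjoint_compl_right.mono_left interior_subset) (fun q hq => ?_) ⟨p, hp, hopen i p hp hi⟩⟩
  by_cases hqi : q ∈ t.closedCell i
  · exact .inl (hopen i q hq hqi)
  · exact .inr hqi

theorem exists_triangle_of_isPreconnected (hM : IsMesh P t) {s : Set Pt}
    (hs : IsPreconnected s) (hne : s.Nonempty) (hhull : s ⊆ convexHull ℝ (P : Set Pt))
    (hedge : ∀ u v, s(u, v) ∈ t.edges → Disjoint s (segment ℝ u v)) :
    ∃ x y z, t.HasTriangle x y z ∧ ∀ p ∈ P, p ∈ closure s → p = x ∨ p = y ∨ p = z := by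
  obtain ⟨x, y, z, h, hsub⟩ := hM.exists_openTriangle_of_isPreconnected hs hne hhull hedge
  refine ⟨x, y, z, h, fun p hp hps => hM.eq_vertex h hp ?_⟩
  rw [← closure_openTriangle (hM.orient_pos h)]
  exact closure_mono hsub hps

theorem isTriangulation (hM : IsMesh P t) : IsTriangulation P t.edges := by
  refine ⟨hM.validSegs, fun T' hT' hsub => hsub.antisymm' fun e he => ?_⟩
  obtain ⟨u, v, hu, hv, huv, rfl⟩ := hT'.1 e he
  by_contra hnot
  have hedge : ∀ a b, s(a, b) ∈ t.edges → Disjoint (openSegment ℝ u v) (segment ℝ a b) := by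
    refine fun a b hab => disjoint_left.2 fun p hp hp' => hT'.2 u v a b he (hsub hab)
      (fun h => hnot (h ▸ hab)) ⟨p, openSegment_subset_segment _ _ _ hp, hp', ?_⟩
    rintro ⟨rfl | rfl, -⟩
    · exact huv (left_mem_openSegment_iff.1 hp)
    · exact huv (right_mem_openSegment_iff.1 hp)
  obtain ⟨x, y, z, h, hvert⟩ := hM.exists_triangle_of_isPreconnected
    (convex_openSegment u v).isPreconnected ⟨_, midpoint_mem_openSegment u v⟩
    ((openSegment_subset_segment _ _ _).trans
      (segment_subset_convexHull (Finset.mem_coe.2 hu) (Finset.mem_coe.2 hv))) hedge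
  rw [closure_openSegment] at hvert
  exact hnot (h.mk_mem_edges (hvert u hu (left_mem_segment _ _ _))
    (hvert v hv (right_mem_segment _ _ _)) huv)

theorem hasTriangle_of_isTriangleOf (hM : IsMesh P t) (h : IsTriangleOf P t.edges x y z)
    (hpos : 0 < orient x y z) : t.HasTriangle x y z := by
  obtain ⟨hx, hy, hz, -, -, -, -, -, -, -, hedge⟩ := h
  obtain ⟨a, b, c, habc, hvert⟩ := hM.exists_triangle_of_isPreconnected
    (s := openTriangle x y z) (convex_closedTriangle x y z).interior.isPreconnected
    (openTriangle_nonempty hpos)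
    (interior_subset.trans (convexHull_mono (by simp [insert_subset_iff, hx, hy, hz])))
    fun u v huv => disjoint_left.2 fun p hp hp' => hedge u v huv p hp' hp
  rw [closure_openTriangle hpos] at hvert
  have hcl := vertices_subset_closedTriangle x y z
  have hrot := habc.rotate
  have hrot' := hrot.rotate
  have h1 := hM.orient_pos habc
  have h2 := hM.orient_pos hrot
  have h3 := hM.orient_pos hrot'
  rcases hvert x hx (hcl (by simp)) with rfl | rfl | rfl <;>
    rcases hvert y hy (hcl (by simp)) with rfl | rfl | rfl <;>
    rcases hvert z hz (hcl (by simp)) with rfl | rfl | rfl <;>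
    first
      | assumption
      | simp at hpos
      | rw [orient_swap_right] at hpos; linarith

theorem isTriangleOf_of_hasTriangle (hM : IsMesh P t) (h : t.HasTriangle x y z) :
    IsTriangleOf P t.edges x y z := by
  have hP := hM.vertices_subset h
  have hpos := hM.orient_pos h
  obtain ⟨hxy, hyz, hxz⟩ := ne_of_orient_pos hpos
  refine ⟨hP (by simp), hP (by simp), hP (by simp), hxy, hyz, hxz,
    h.mk_mem_edges (by simp) (by simp) hxy, h.mk_mem_edges (by simp) (by simp) hyz,
    h.mk_mem_edges (by simp) (by simp) hxz, fun p hp hpo => ?_, fun u v huv p hp hpo =>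
      (hM.disjoint_openTriangle_edge h huv).notMem_of_mem_left hpo hp⟩
  have hpo' := (mem_openTriangle_iff hpos).1 hpo
  rcases hM.eq_vertex h hp (openTriangle_subset_closedTriangle _ _ _ hpo) with rfl | rfl | rfl <;>
    simp at hpo'

theorem isTriangleOf_and_clockwise_iff (hM : IsMesh P t) :
    IsTriangleOf P t.edges x y z ∧ Clockwise x y z ↔ t.HasTriangle x z y := by
  rw [clockwise_iff_orient_pos]
  exact ⟨fun h => hM.hasTriangle_of_isTriangleOf h.1.swap_right h.2,
    fun h => ⟨(hM.isTriangleOf_of_hasTriangle h).swap_right, hM.orient_pos h⟩⟩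

end IsMesh

end Mesh

section Realization

variable {ι V : Type*} {t : TriFamily ι V} {P Q : Finset Pt}

/-- The combinatorial triangle family `t` can be drawn as a dissection of `conv P`, with the
vertices of `t` placed bijectively at the points of `P`. -/
def TriFamily.Realizes (t : TriFamily ι V) (P : Finset Pt) : Prop :=
  ∃ g : V → Pt, g.Injective ∧ range g = P ∧ IsMesh P (t.map g)

theorem TriFamily.Realizes.card_eq (h : t.Realizes P) : P.card = Nat.card V := by
  obtain ⟨g, hg, hrange, -⟩ := h
  rw [← ncard_coe_finset, ← hrange, ← image_univ, ncard_image_of_injective _ hg, ncard_univ]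

theorem TriFamily.Realizes.exists_compatible (hP : t.Realizes P) (hQ : t.Realizes Q) :
    ∃ TP TQ : Set (Sym2 Pt), IsTriangulation P TP ∧ IsTriangulation Q TQ ∧
      Compatible P Q TP TQ := by
  obtain ⟨g, hg, hgP, hMP⟩ := hP
  obtain ⟨f, hf, hfQ, hMQ⟩ := hQ
  have hφ : Function.extend g f id ∘ g = f := funext fun v => hg.extend_apply f id v
  refine ⟨_, _, hMP.isTriangulation, hMQ.isTriangulation, Function.extend g f id, ?_, ?_⟩
  · have himage : range f = Function.extend g f id '' range g := by rw [← range_comp, hφ]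
    rw [← hgP, ← hfQ, himage]
    exact (Function.Injective.injOn_range (hφ.symm ▸ hf)).bijOn_image
  · intro a b c ha hb hc
    rw [← Finset.mem_coe, ← hgP] at ha hb hc
    obtain ⟨x, rfl⟩ := ha
    obtain ⟨y, rfl⟩ := hb
    obtain ⟨z, rfl⟩ := hc
    simp only [hMP.isTriangleOf_and_clockwise_iff, hMQ.isTriangleOf_and_clockwise_iff,
      hg.extend_apply, hasTriangle_map_iff hg, hasTriangle_map_iff hf]

end Realization

section Winding

/-- The horizontal ray going right from `x` meets `ab` from below. The half-open condition on the
heights makes each crossing through a common vertex of two edges count exactly once. -/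
def UpCrosses (x a b : Pt) : Prop := a.2 ≤ x.2 ∧ x.2 < b.2 ∧ 0 < orient a b x

open Classical in
/-- The signed number of crossings of the edge from `a` to `b` with the ray going right from `x`. -/
noncomputable def crossing (x a b : Pt) : ℤ :=
  (if UpCrosses x a b then 1 else 0) - if UpCrosses x b a then 1 else 0

/-- The winding number of the boundary of the triangle `abc` around `x`, as a count of ray
crossings. -/
noncomputable def winding (x a b c : Pt) : ℤ := crossing x a b + crossing x b c + crossing x c a

variable {a b c x : Pt}

theorem crossing_swap (x a b : Pt) : crossing x b a = -crossing x a b := (neg_sub _ _).symm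

theorem winding_rotate (x a b c : Pt) : winding x b c a = winding x a b c := by
  simp only [winding]; ring

theorem crossing_eq_zero_of_lt (ha : x.2 < a.2) (hb : x.2 < b.2) : crossing x a b = 0 := by
  simp [crossing, UpCrosses, ha.not_ge, hb.not_ge]

theorem crossing_eq_zero_of_le (ha : a.2 ≤ x.2) (hb : b.2 ≤ x.2) : crossing x a b = 0 := by
  simp [crossing, UpCrosses, ha.not_gt, hb.not_gt]

theorem crossing_of_le_of_lt (ha : a.2 ≤ x.2) (hb : x.2 < b.2) [Decidable (0 < orient a b x)] :
    crossing x a b = if 0 < orient a b x then 1 else 0 := by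
  simp [crossing, UpCrosses, ha, hb, hb.not_ge]

theorem orient_height_eq_zero (a b c x : Pt) :
    orient b c x * (a.2 - x.2) + orient c a x * (b.2 - x.2) + orient a b x * (c.2 - x.2) = 0 := by
  simp only [orient_eq]; ring

/-- The alternative satisfied by a point and a positively oriented triangle: its winding number
is `1` and the point lies in the closed triangle, or it is `0` and the point lies outside the open
triangle. On the boundary either can happen. -/
def WindingAlternative (x a b c : Pt) : Prop :=
  winding x a b c = 0 ∧ x ∉ openTriangle a b c ∨ winding x a b c = 1 ∧ x ∈ closedTriangle a b c

theorem windingAlternative_rotate : WindingAlternative x b c a ↔ WindingAlternative x a b c := by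
  simp only [WindingAlternative, winding_rotate, openTriangle_rotate, closedTriangle_rotate]

theorem windingAlternative_of_straddle (h : 0 < orient a b c) (ha : a.2 ≤ x.2) (hb : x.2 < b.2) :
    WindingAlternative x a b c := by
  classical
  have hsum := orient_add_orient_add_orient a b c x
  have hheight := orient_height_eq_zero a b c x
  have hca := crossing_swap x a c
  have hbc := crossing_swap x c b
  rw [WindingAlternative, mem_openTriangle_iff h, mem_closedTriangle_iff h, winding,
    crossing_of_le_of_lt ha hb]
  rcases le_or_gt c.2 x.2 with hc | hc
  · rw [crossing_eq_zero_of_le hc ha, hbc, crossing_of_le_of_lt hc hb, orient_swap b c x]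
    split_ifs with h1 h2 h2
    · left; grind
    · right
      refine ⟨by norm_num, h1.le, by linarith, ?_⟩
      by_contra!
      nlinarith
    · exfalso
      have : orient c a x ≤ 0 := by
        by_contra!
        nlinarith
      linarith
    · left; grind
  · rw [crossing_eq_zero_of_lt hb hc, hca, crossing_of_le_of_lt ha hc, orient_swap c a x]
    split_ifs with h1 h2 h2
    · left; grind
    · right
      refine ⟨by norm_num, h1.le, ?_, by linarith⟩
      by_contra!
      nlinarith
    · exfalso
      have : orient b c x ≤ 0 := by
        by_contra!
        nlinarith
      linarith
    · left; grind

theorem windingAlternative_of_orient_pos (h : 0 < orient a b c) (x : Pt) :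
    WindingAlternative x a b c := by
  have h' : 0 < orient b c a := by rwa [orient_rotate]
  have h'' : 0 < orient c a b := by rwa [orient_rotate]
  have hheight := orient_height_eq_zero a b c x
  by_cases hlow : a.2 ≤ x.2 ∧ b.2 ≤ x.2 ∧ c.2 ≤ x.2
  · obtain ⟨ha, hb, hc⟩ := hlow
    left
    refine ⟨by simp [winding, crossing_eq_zero_of_le, *], fun hx => h.ne' ?_⟩
    obtain ⟨h1, h2, h3⟩ := (mem_openTriangle_iff h).1 hx
    have ha : a.2 = x.2 := by nlinarith
    have hb : b.2 = x.2 := by nlinarith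
    have hc : c.2 = x.2 := by nlinarith
    simp [orient_eq, ha, hb, hc]
  by_cases hhigh : x.2 < a.2 ∧ x.2 < b.2 ∧ x.2 < c.2
  · obtain ⟨ha, hb, hc⟩ := hhigh
    left
    refine ⟨by simp [winding, crossing_eq_zero_of_lt, *], fun hx => ?_⟩
    obtain ⟨h1, h2, h3⟩ := (mem_openTriangle_iff h).1 hx
    nlinarith [mul_pos h1 (sub_pos.2 hc), mul_pos h2 (sub_pos.2 ha), mul_pos h3 (sub_pos.2 hb)]
  have hstraddle : (a.2 ≤ x.2 ∧ x.2 < b.2) ∨ (b.2 ≤ x.2 ∧ x.2 < c.2) ∨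
      (c.2 ≤ x.2 ∧ x.2 < a.2) := by grind
  rcases hstraddle with ⟨hl, hu⟩ | ⟨hl, hu⟩ | ⟨hl, hu⟩
  · exact windingAlternative_of_straddle h hl hu
  · exact windingAlternative_rotate.1 (windingAlternative_of_straddle h' hl hu)
  · exact windingAlternative_rotate.2 (windingAlternative_of_straddle h'' hl hu)

theorem winding_nonneg (h : 0 < orient a b c) (x : Pt) : 0 ≤ winding x a b c := by
  rcases windingAlternative_of_orient_pos h x with ⟨h, -⟩ | ⟨h, -⟩ <;> simp [h]

theorem mem_closedTriangle_of_winding_ne_zero (h : 0 < orient a b c)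
    (hx : winding x a b c ≠ 0) : x ∈ closedTriangle a b c :=
  ((windingAlternative_of_orient_pos h x).resolve_left fun h => hx h.1).2

theorem winding_of_mem_openTriangle (h : 0 < orient a b c) (hx : x ∈ openTriangle a b c) :
    winding x a b c = 1 :=
  ((windingAlternative_of_orient_pos h x).resolve_left fun h => h.2 hx).1

theorem sum_winding_cone {ι : Type*} [Fintype ι] (σ : Equiv.Perm ι) (v : ι → Pt) (x q : Pt) :
    ∑ i, winding x q (v i) (v (σ i)) = ∑ i, crossing x (v i) (v (σ i)) := by
  have hσ := Equiv.sum_comp σ fun i => crossing x q (v i)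
  simp only [winding, crossing_swap x q, Finset.sum_add_distrib, Finset.sum_neg_distrib, hσ]
  ring

theorem winding_flip (x p q a b c : Pt) :
    winding x p a b + winding x p b c + winding x p c q + winding x p q a =
      winding x q a b + winding x q b c := by
  simp only [winding]
  linarith [crossing_swap x p q, crossing_swap x b p, crossing_swap x c p, crossing_swap x a p,
    crossing_swap x b q, crossing_swap x c q, crossing_swap x a q, crossing_swap x c a]

theorem IsMesh.of_sum_winding {ι : Type*} [Fintype ι] {P : Finset Pt} {t : TriFamily ι Pt}
    (mem : ∀ i, {t.a i, t.b i, t.c i} ⊆ (P : Set Pt))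
    (pos : ∀ i, 0 < orient (t.a i) (t.b i) (t.c i))
    (empty : ∀ i, ∀ p ∈ P, p ∈ t.closedCell i → p ∈ ({t.a i, t.b i, t.c i} : Set Pt))
    (hne : (interior (convexHull ℝ (P : Set Pt))).Nonempty)
    (hsum : ∀ x ∈ interior (convexHull ℝ (P : Set Pt)),
      ∑ i, winding x (t.a i) (t.b i) (t.c i) = 1) : IsMesh P t := by
  refine ⟨mem, pos, empty, ?_, fun i j hij => disjoint_left.2 fun x hi hj => ?_⟩
  · have hclosed : IsClosed (⋃ i, t.closedCell i) :=
      isClosed_iUnion_of_finite fun i => isClosed_closedTriangle _ _ _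
    have hsub : interior (convexHull ℝ (P : Set Pt)) ⊆ ⋃ i, t.closedCell i := by
      intro x hx
      obtain ⟨i, -, hi⟩ := Finset.exists_ne_zero_of_sum_ne_zero ((hsum x hx).trans_ne one_ne_zero)
      exact mem_iUnion.2 ⟨i, mem_closedTriangle_of_winding_ne_zero (pos i) hi⟩
    refine (subset_closure.trans ?_).trans (closure_minimal hsub hclosed)
    rw [(convex_convexHull ℝ _).closure_interior_eq_closure_of_nonempty_interior hne]
  · have hx : x ∈ interior (convexHull ℝ (P : Set Pt)) :=
      interior_mono (convexHull_mono (mem i)) hi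
    have hle := Finset.add_le_sum (fun k _ => winding_nonneg (pos k) x) (Finset.mem_univ i)
      (Finset.mem_univ j) hij
    rw [hsum x hx, winding_of_mem_openTriangle (pos i) hi,
      winding_of_mem_openTriangle (pos j) hj] at hle
    norm_num at hle

end Winding

section Cyclic

theorem exists_zmod_orbit {α : Type*} [Finite α] [Nonempty α] (σ : α → α) :
    ∃ (m : ℕ) (_ : NeZero m) (g : ZMod m → α), g.Injective ∧ ∀ i, g (i + 1) = σ (g i) := by
  obtain ⟨a, ha⟩ : ∃ a, a ∈ Function.periodicPts σ := by
    have a₀ := Classical.arbitrary α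
    obtain ⟨i, j, hij, h⟩ := Finite.exists_ne_map_eq_of_infinite fun n : ℕ => σ^[n] a₀
    wlog hlt : i < j generalizing i j
    · exact this j i hij.symm h.symm (by omega)
    refine ⟨σ^[i] a₀, Function.mk_mem_periodicPts (n := j - i) (by omega) ?_⟩
    rw [Function.IsPeriodicPt, Function.IsFixedPt, ← Function.iterate_add_apply]
    simpa only [Nat.sub_add_cancel hlt.le] using h.symm
  have hm : NeZero (Function.minimalPeriod σ a) :=
    ⟨(Function.minimalPeriod_pos_of_mem_periodicPts ha).ne'⟩
  refine ⟨_, hm, fun i => σ^[i.val] a, fun i j hij => ?_, fun i => ?_⟩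
  · exact ZMod.val_injective _
      ((Function.iterate_eq_iterate_iff_of_lt_minimalPeriod i.val_lt j.val_lt).1 hij)
  · change σ^[(i + 1).val] a = σ (σ^[i.val] a)
    rw [← Function.iterate_succ_apply' σ, ZMod.val_add, ZMod.val_one_eq_one_mod, Nat.add_mod_mod]
    exact Function.iterate_mod_minimalPeriod_eq

theorem forall_of_forall_succ {m : ℕ} [NeZero m] {S : ZMod m → Prop} (h : ∀ i, S i → S (i + 1))
    {i : ZMod m} (hi : S i) (j : ZMod m) : S j := by
  obtain ⟨n, hn⟩ := ZMod.natCast_zmod_surjective (j - i)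
  rw [← sub_add_cancel j i, ← hn]
  induction n generalizing j with
  | zero => simpa
  | succ n ih =>
    push_cast
    rw [add_right_comm]
    exact h _ (ih (n + i) (by simp))

end Cyclic

section Star

variable {q x a b e : Pt}

theorem sq_add_sq_pos_of_ne (hx : x ≠ q) : 0 < (x.1 - q.1) ^ 2 + (x.2 - q.2) ^ 2 := by
  by_contra! h
  refine hx (Prod.ext ?_ ?_) <;> nlinarith [sq_nonneg (x.1 - q.1), sq_nonneg (x.2 - q.2)]

/-- The component of `a - q` in the direction `x - q`, up to a positive factor depending on `x` and
`q` only. -/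
def along (q x a : Pt) : ℝ := (a.1 - q.1) * (x.1 - q.1) + (a.2 - q.2) * (x.2 - q.2)

theorem along_mul_orient_sub (q x a b : Pt) :
    along q x a * orient q x b - along q x b * orient q x a =
      ((x.1 - q.1) ^ 2 + (x.2 - q.2) ^ 2) * orient q a b := by
  simp only [along, orient_eq]; ring

theorem along_mul_orient_lt (hx : x ≠ q) (h : 0 < orient q a b) :
    along q x b * orient q x a < along q x a * orient q x b := by
  rw [← sub_pos, along_mul_orient_sub]
  exact mul_pos (sq_add_sq_pos_of_ne hx) h

theorem orient_mul_orient_neg (hx : x ≠ q) (ha : orient q x a = 0) (hea : 0 < orient q e a)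
    (hab : 0 < orient q a b) : orient q x e * orient q x b < 0 := by
  have h1 := along_mul_orient_lt hx hea
  have h2 := along_mul_orient_lt hx hab
  rw [ha, mul_zero] at h1 h2
  nlinarith [mul_pos_of_neg_of_neg h1 (neg_neg_of_pos h2), sq_nonneg (along q x a)]

-- If no edge crossed the line `qx` upwards, all `v i` would lie strictly on one side of it, and
-- `along / orient` would decrease strictly all the way round the polygon.
theorem exists_orient_nonpos_pos {m : ℕ} [NeZero m] {v : ZMod m → Pt}
    (hv : ∀ i, 0 < orient q (v i) (v (i + 1))) (hx : x ≠ q) :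
    ∃ i, orient q x (v i) ≤ 0 ∧ 0 < orient q x (v (i + 1)) := by
  by_contra! hno
  have hside : ∀ i, 0 < orient q x (v i) * orient q x (v (i + 1)) := by
    by_cases hpos : ∀ i, 0 < orient q x (v i)
    · exact fun i => mul_pos (hpos _) (hpos _)
    push Not at hpos
    obtain ⟨i₀, hi₀⟩ := hpos
    have hle := forall_of_forall_succ (S := fun i => orient q x (v i) ≤ 0) hno hi₀
    have hlt : ∀ i, orient q x (v i) < 0 := by
      refine fun i => (hle i).lt_of_ne fun h0 => ?_
      have hprev := hv (i - 1)
      rw [sub_add_cancel] at hprev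
      have := orient_mul_orient_neg hx h0 hprev (hv i)
      exact this.not_ge (mul_nonneg_of_nonpos_of_nonpos (hle _) (hle _))
    exact fun i => mul_pos_of_neg_of_neg (hlt _) (hlt _)
  obtain ⟨i, hi⟩ := Finite.exists_min fun i => along q x (v i) / orient q x (v i)
  have hlt := sub_pos.2 (along_mul_orient_lt hx (hv i))
  have h0 := left_ne_zero_of_mul (hside i).ne'
  have h1 := right_ne_zero_of_mul (hside i).ne'
  have := div_pos hlt (hside i)
  have hsub : along q x (v i) / orient q x (v i) - along q x (v (i + 1)) / orient q x (v (i + 1)) =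
      (along q x (v i) * orient q x (v (i + 1)) - along q x (v (i + 1)) * orient q x (v i)) /
        (orient q x (v i) * orient q x (v (i + 1))) := by field_simp
  linarith [hi (i + 1)]

end Star

section Hull

/-- The pair `(a, b)` is an edge of the convex polygon `conv P`, subdivided at the points of `P`,
with `P` on its left. -/
structure IsHullEdge (P : Finset Pt) (a b : Pt) : Prop where
  left_mem : a ∈ P
  right_mem : b ∈ P
  ne : a ≠ b
  left : ∀ z ∈ P, 0 ≤ orient a b z
  seg : ∀ z ∈ P, z ∈ segment ℝ a b → z = a ∨ z = b

/-- The points of `P` on the boundary of `conv P`, in counterclockwise order. -/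
structure IsHullCycle (P : Finset Pt) {m : ℕ} (h : ZMod m → Pt) : Prop where
  inj : h.Injective
  edge : ∀ i, IsHullEdge P (h i) (h (i + 1))
  hull : ∀ z ∈ P, z ∉ interior (convexHull ℝ (P : Set Pt)) → z ∈ range h

theorem mem_segment_of_mem_convexHull_insert {E : Type*} [AddCommGroup E] [Module ℝ E]
    [TopologicalSpace E] [IsTopologicalAddGroup E] [ContinuousConstSMul ℝ E] {S : Set E}
    (hS : Convex ℝ S) {a b c z : E} (ha : a ∈ interior S) (hb : b ∈ S) (hc : c ∈ S)
    (hz : z ∈ convexHull ℝ {a, b, c}) (hzS : z ∉ interior S) : z ∈ segment ℝ b c := by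
  rw [convexHull_insert (insert_nonempty _ _), convexHull_pair, convexJoin_singleton_left] at hz
  simp only [mem_iUnion, exists_prop] at hz
  obtain ⟨y, hy, hzy⟩ := hz
  by_cases hyz : y = z
  · exact hyz ▸ hy
  have haz : a ≠ z := fun h => hzS (h ▸ ha)
  exact absurd (hS.openSegment_interior_self_subset_interior ha (hS.segment_subset hb hc hy)
    (mem_openSegment_of_ne_left_right haz hyz hzy)) hzS

theorem eq_of_mem_convexHull_insert {E : Type*} [AddCommGroup E] [Module ℝ E]
    [TopologicalSpace E] [IsTopologicalAddGroup E] [ContinuousConstSMul ℝ E] {S : Set E}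
    (hS : Convex ℝ S) {a b c z : E} (ha : a ∈ interior S) (hb : b ∈ interior S) (hc : c ∈ S)
    (hz : z ∈ convexHull ℝ {a, b, c}) (hzS : z ∉ interior S) : z = c := by
  have hbc := mem_segment_of_mem_convexHull_insert hS ha (interior_subset hb) hc hz hzS
  rw [← convexHull_pair, ← pair_eq_singleton c] at hbc
  simpa using mem_segment_of_mem_convexHull_insert hS hb hc hc hbc hzS

theorem exists_nearest_mem_segment {E : Type*} [NormedAddCommGroup E] [NormedSpace ℝ E]
    {P : Finset E} {a b : E} (hb : b ∈ P) (hab : a ≠ b) :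
    ∃ c ∈ P, a ≠ c ∧ c ∈ segment ℝ a b ∧ ∀ z ∈ P, z ∈ segment ℝ a c → z = a ∨ z = c := by
  classical
  obtain ⟨c, hc, hmin⟩ := Finset.exists_min_image {z ∈ P | a ≠ z ∧ z ∈ segment ℝ a b} (dist a)
    ⟨b, by simp [hb, hab, right_mem_segment]⟩
  simp only [Finset.mem_filter] at hc hmin
  refine ⟨c, hc.1, hc.2.1, hc.2.2, fun z hz hzc => or_iff_not_imp_left.2 fun hza => ?_⟩
  have hle := hmin z ⟨hz, Ne.symm hza,
    (convex_segment a b).segment_subset (left_mem_segment _ _ _) hc.2.2 hzc⟩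
  exact dist_le_zero.1 (by linarith [dist_add_dist_of_mem_segment hzc])

theorem exists_orient_nonneg_of_notMem_interior {S : Set Pt} (hS : Convex ℝ S)
    (hne : (interior S).Nonempty) {a : Pt} (ha : a ∉ interior S) :
    ∃ v ≠ a, ∀ z ∈ S, 0 ≤ orient a v z := by
  obtain ⟨f, hf⟩ := geometric_hahn_banach_open_point hS.interior isOpen_interior ha
  have hcoord : ∀ z : Pt, f z = z.1 * f (1, 0) + z.2 * f (0, 1) := by
    intro z
    have hz : z = z.1 • ((1 : ℝ), (0 : ℝ)) + z.2 • ((0 : ℝ), (1 : ℝ)) := by ext <;> simp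
    conv_lhs => rw [hz, map_add, map_smul, map_smul, smul_eq_mul, smul_eq_mul]
  have horient : ∀ z, orient a (a + (-f (0, 1), f (1, 0))) z = f a - f z := by
    intro z
    simp only [orient_eq, hcoord a, hcoord z, Prod.fst_add, Prod.snd_add]; ring
  refine ⟨a + (-f (0, 1), f (1, 0)), fun hv => ?_, fun z hz => ?_⟩
  · obtain ⟨q, hq⟩ := hne
    have := horient q
    rw [hv, orient_self_left] at this
    exact (hf q hq).ne (by linarith)
  · rw [horient, sub_nonneg]
    refine closure_minimal (fun x hx => (hf x hx).le) (isClosed_le f.continuous continuous_const) ?_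
    rw [hS.closure_interior_eq_closure_of_nonempty_interior hne]
    exact subset_closure hz

-- The point seen from `a` under the least angle against the direction of `v` does it.
theorem exists_orient_nonneg_of_forall_orient_nonneg {P : Finset Pt} {a v q : Pt} (hva : v ≠ a)
    (hv : ∀ z ∈ P, 0 ≤ orient a v z) (hq : q ∈ P) (hqa : q ≠ a) :
    ∃ b ∈ P, a ≠ b ∧ ∀ z ∈ P, 0 ≤ orient a b z := by
  classical
  let w (z : Pt) : ℂ := ⟨along a v z, orient a v z⟩
  have harg : ∀ z ∈ P, 0 ≤ (w z).arg := fun z hz => Complex.arg_nonneg_iff.2 (hv z hz)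
  obtain ⟨b, hb, hmin⟩ := Finset.exists_min_image (P.erase a) (fun z => (w z).arg)
    ⟨q, Finset.mem_erase.2 ⟨hqa, hq⟩⟩
  rw [Finset.mem_erase] at hb
  refine ⟨b, hb.2, hb.1.symm, fun z hz => ?_⟩
  by_cases hza : z = a
  · simp [hza]
  have hangle : along a v b * orient a v z - along a v z * orient a v b =
      ‖w b‖ * ‖w z‖ * Real.sin ((w z).arg - (w b).arg) := by
    change (w b).re * (w z).im - (w z).re * (w b).im = _
    rw [Real.sin_sub, ← Complex.norm_mul_cos_arg (w b), ← Complex.norm_mul_sin_arg (w b),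
      ← Complex.norm_mul_cos_arg (w z), ← Complex.norm_mul_sin_arg (w z)]
    ring
  refine nonneg_of_mul_nonneg_right (a := (v.1 - a.1) ^ 2 + (v.2 - a.2) ^ 2) ?_
    (sq_add_sq_pos_of_ne hva)
  rw [← along_mul_orient_sub, hangle]
  have hsin := Real.sin_nonneg_of_nonneg_of_le_pi
    (sub_nonneg.2 (hmin z (Finset.mem_erase.2 ⟨hza, hz⟩)))
    (by linarith [harg b hb.2, (w z).arg_le_pi])
  positivity

theorem exists_notMem_interior_convexHull {E : Type*} [NormedAddCommGroup E] [NormedSpace ℝ E]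
    [Nontrivial E] {S : Set E} (hS : S.Finite) (hne : S.Nonempty) :
    ∃ a ∈ S, a ∉ interior (convexHull ℝ S) := by
  by_contra! hsub
  have hopen : convexHull ℝ S ⊆ interior (convexHull ℝ S) :=
    convexHull_min hsub (convex_convexHull ℝ S).interior
  have hclopen : IsClopen (convexHull ℝ S) :=
    ⟨hS.isClosed_convexHull ℝ, subset_interior_iff_isOpen.1 hopen⟩
  have := NormedSpace.noncompactSpace ℝ E
  exact noncompact_univ E (hclopen.eq_univ hne.convexHull ▸ hS.isCompact_convexHull ℝ)

variable {P : Finset Pt} {a b q p x z : Pt}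

theorem IsHullEdge.orient_pos (he : IsHullEdge P a b)
    (hx : x ∈ interior (convexHull ℝ (P : Set Pt))) : 0 < orient a b x :=
  orient_pos_of_mem_interior he.ne (fun _ => orient_nonneg_of_mem_convexHull he.left) hx

theorem IsHullEdge.right_notMem_interior (he : IsHullEdge P a b) :
    b ∉ interior (convexHull ℝ (P : Set Pt)) := fun hb => by
  simpa using he.orient_pos hb

theorem exists_isHullEdge (hne : (interior (convexHull ℝ (P : Set Pt))).Nonempty) (ha : a ∈ P)
    (ha' : a ∉ interior (convexHull ℝ (P : Set Pt))) : ∃ b, IsHullEdge P a b := by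
  obtain ⟨v, hva, hv⟩ := exists_orient_nonneg_of_notMem_interior (convex_convexHull ℝ _) hne ha'
  obtain ⟨q, hq, hqa⟩ : ∃ q ∈ P, q ≠ a := by
    by_contra! h
    have : (P : Set Pt) = {a} := by grind
    simp [this] at hne
  obtain ⟨b, hb, hab, hleft⟩ := exists_orient_nonneg_of_forall_orient_nonneg hva
    (fun z hz => hv z (subset_convexHull ℝ _ hz)) hq hqa
  obtain ⟨c, hc, hac, hcb, hseg⟩ := exists_nearest_mem_segment hb hab
  refine ⟨c, ha, hc, hac, fun z hz => ?_, hseg⟩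
  rw [orient_rotate]
  refine orient_nonneg_of_mem_convexHull (S := {a, b}) ?_ (by rwa [convexHull_pair])
  have := hleft z hz
  rw [orient_rotate] at this
  simp [this]

theorem mem_segment_of_orient_le_of_le {c d : Pt} (h : orient a b q ≠ 0) (hz : orient a b z = 0)
    (hab : orient c d a < orient c d b) (haz : orient c d a ≤ orient c d z)
    (hzb : orient c d z ≤ orient c d b) : z ∈ segment ℝ a b := by
  obtain ⟨t, rfl⟩ := mem_affineSpan_pair_iff_exists_lineMap_eq.1 (mem_line_of_orient_eq_zero h hz)
  rw [orient_lineMap] at haz hzb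
  rw [segment_eq_image_lineMap]
  exact mem_image_of_mem _ ⟨by nlinarith, by nlinarith⟩

theorem IsHullEdge.eq_of_mem_closedTriangle (he : IsHullEdge P a b)
    (hq : q ∈ interior (convexHull ℝ (P : Set Pt))) (hz : z ∈ P)
    (hz' : z ∉ interior (convexHull ℝ (P : Set Pt))) (hzt : z ∈ closedTriangle q a b) :
    z = a ∨ z = b :=
  he.seg z hz <| mem_segment_of_mem_convexHull_insert (convex_convexHull ℝ _) hq
    (subset_convexHull ℝ _ he.left_mem) (subset_convexHull ℝ _ he.right_mem) hzt hz'

namespace IsHullCycle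

variable {m : ℕ} {h : ZMod m → Pt} {u v : Pt}

theorem mem (hC : IsHullCycle P h) (i : ZMod m) : h i ∈ P := (hC.edge i).left_mem

theorem notMem_interior (hC : IsHullCycle P h) (i : ZMod m) :
    h i ∉ interior (convexHull ℝ (P : Set Pt)) := by
  simpa using (hC.edge (i - 1)).right_notMem_interior

theorem orient_pos (hC : IsHullCycle P h) (hq : q ∈ interior (convexHull ℝ (P : Set Pt)))
    (i : ZMod m) : 0 < orient q (h i) (h (i + 1)) := by
  rw [← orient_rotate]
  exact (hC.edge i).orient_pos hq

-- Up to a common factor, `hzero` computes the distance between the points at which the lines of the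
-- two edges meet `uv` in two ways, from either edge.
theorem eq_of_orient_nonpos_pos (hC : IsHullCycle P h)
    (hne : (interior (convexHull ℝ (P : Set Pt))).Nonempty) {i j : ZMod m}
    (hi : orient u v (h i) ≤ 0) (hi' : 0 < orient u v (h (i + 1))) (hj : orient u v (h j) ≤ 0)
    (hj' : 0 < orient u v (h (j + 1))) : i = j := by
  wlog hij : orient u v (h i) ≤ orient u v (h j) generalizing i j
  · exact (this hj hj' hi hi' (le_of_not_ge hij)).symm
  obtain ⟨q, hq⟩ := hne
  have hzero : ∀ a b c d : Pt, orient c d a * orient u v b - orient c d b * orient u v a +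
      orient a b c * orient u v d - orient a b d * orient u v c = 0 := by
    intro a b c d; simp only [orient_eq]; ring
  have hcol : orient (h i) (h (i + 1)) (h j) = 0 := by
    have h1 := (hC.edge j).left _ (hC.mem i)
    have h2 := (hC.edge j).left _ (hC.mem (i + 1))
    have h3 := (hC.edge i).left _ (hC.mem j)
    have h4 := (hC.edge i).left _ (hC.mem (j + 1))
    have := hzero (h i) (h (i + 1)) (h j) (h (j + 1))
    have hmul : orient (h i) (h (i + 1)) (h j) * orient u v (h (j + 1)) = 0 := by
      nlinarith [mul_nonneg h1 hi'.le, mul_nonneg h2 (neg_nonneg.2 hi),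
        mul_nonneg h3 hj'.le, mul_nonneg h4 (neg_nonneg.2 hj)]
    exact (mul_eq_zero.1 hmul).resolve_right hj'.ne'
  have hseg := mem_segment_of_orient_le_of_le ((hC.edge i).orient_pos hq).ne' hcol
    (hi.trans_lt hi') hij (hj.trans hi'.le)
  rcases (hC.edge i).seg _ (hC.mem j) hseg with hji | hji
  · exact (hC.inj hji).symm
  · rw [hji] at hj
    exact absurd hi' hj.not_gt

theorem sum_crossing [NeZero m] (hC : IsHullCycle P h)
    (hx : x ∈ interior (convexHull ℝ (P : Set Pt))) :
    ∑ i, crossing x (h i) (h (i + 1)) = 1 := by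
  classical
  have hheight : ∀ z : Pt, orient x (x + (1, 0)) z = z.2 - x.2 := by
    intro z; simp [orient_eq]
  obtain ⟨i, hi, hi'⟩ := exists_orient_nonpos_pos (hC.orient_pos hx) (x := x + (1, 0)) (by simp)
  have hup : ∀ j, UpCrosses x (h j) (h (j + 1)) ↔ j = i := by
    have hiff : ∀ j, UpCrosses x (h j) (h (j + 1)) ↔
        orient x (x + (1, 0)) (h j) ≤ 0 ∧ 0 < orient x (x + (1, 0)) (h (j + 1)) := by
      intro j
      simp [UpCrosses, hheight, (hC.edge j).orient_pos hx]
    refine fun j => (hiff j).trans ⟨fun hj => ?_, ?_⟩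
    · exact hC.eq_of_orient_nonpos_pos ⟨x, hx⟩ hj.1 hj.2 hi hi'
    · rintro rfl; exact ⟨hi, hi'⟩
  have hdown : ∀ j, ¬UpCrosses x (h (j + 1)) (h j) := fun j hj => by
    have := hj.2.2
    rw [orient_swap] at this
    linarith [(hC.edge j).orient_pos hx]
  simp [crossing, hup, hdown]

theorem sum_winding [NeZero m] (hC : IsHullCycle P h)
    (hx : x ∈ interior (convexHull ℝ (P : Set Pt))) (q : Pt) :
    ∑ i, winding x q (h i) (h (i + 1)) = 1 :=
  (sum_winding_cone (Equiv.addRight 1) h x q).trans (hC.sum_crossing hx)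

theorem rotate (hC : IsHullCycle P h) (c : ZMod m) : IsHullCycle P fun i => h (i + c) where
  inj := hC.inj.comp (add_left_injective c)
  edge i := by
    simpa only [add_right_comm] using hC.edge (i + c)
  hull z hz hz' := by
    obtain ⟨i, rfl⟩ := hC.hull z hz hz'
    exact ⟨i - c, by simp⟩

theorem orient_mul_orient_neg (hC : IsHullCycle P h)
    (hq : q ∈ interior (convexHull ℝ (P : Set Pt))) (hp : p ≠ q) {i : ZMod m}
    (hi : orient q p (h (i + 1)) = 0) : orient q p (h i) * orient q p (h (i + 2)) < 0 := by
  have hnext := hC.orient_pos hq (i + 1)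
  rw [add_assoc, one_add_one_eq_two] at hnext
  exact _root_.orient_mul_orient_neg hp hi (hC.orient_pos hq i) hnext

theorem exists_orient_mul_orient_neg [NeZero m] (hC : IsHullCycle P h)
    (hq : q ∈ interior (convexHull ℝ (P : Set Pt))) (hp : p ≠ q) :
    ∃ c, orient q p (h c) * orient q p (h (c + 2)) < 0 := by
  by_contra! hno
  have hne : ∀ i, orient q p (h i) ≠ 0 := fun i hi =>
    (hno (i - 1)).not_gt (hC.orient_mul_orient_neg hq hp (by simpa using hi))
  have hpos : ∀ i, 0 < orient q p (h i) * orient q p (h (i + 2)) := fun i =>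
    (hno i).lt_of_ne' (mul_ne_zero (hne _) (hne _))
  obtain ⟨i, hi, hi'⟩ := exists_orient_nonpos_pos (hC.orient_pos hq) hp
  have h2 := neg_of_mul_pos_right (hpos i) hi
  have h3 := (pos_iff_pos_of_mul_pos (hpos (i + 1))).1 hi'
  rw [add_right_comm] at h3
  have heq := hC.eq_of_orient_nonpos_pos ⟨q, hq⟩ hi hi' h2.le h3
  have hstep := hC.orient_pos hq i
  have hback := hC.orient_pos hq (i + 1)
  rw [add_assoc, one_add_one_eq_two, ← heq, orient_swap_right] at hback
  linarith

theorem exists_rotate_orient_neg_pos [NeZero m] (hC : IsHullCycle P h)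
    (hq : q ∈ interior (convexHull ℝ (P : Set Pt))) (hpq : p ≠ q) :
    ∃ h' : ZMod m → Pt, IsHullCycle P h' ∧
      (orient q p (h' 0) < 0 ∧ 0 < orient q p (h' 2) ∨
        orient p q (h' 0) < 0 ∧ 0 < orient p q (h' 2)) := by
  obtain ⟨c, hc⟩ := hC.exists_orient_mul_orient_neg hq hpq
  refine ⟨_, hC.rotate c, ?_⟩
  rw [zero_add, add_comm 2 c, orient_swap q p, orient_swap q p, neg_neg_iff_pos, neg_pos]
  rcases mul_neg_iff.1 hc with hc | hc
  · exact .inr hc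
  · exact .inl hc

end IsHullCycle

-- Every boundary point of `P` is found by the walk along the edges since the walk winds around `q`.
theorem exists_isHullCycle (hne : (interior (convexHull ℝ (P : Set Pt))).Nonempty) :
    ∃ (m : ℕ) (_ : NeZero m) (h : ZMod m → Pt), IsHullCycle P h := by
  let H : Type := {a : Pt // a ∈ P ∧ a ∉ interior (convexHull ℝ (P : Set Pt))}
  have hfin : Finite H := (P.finite_toSet.subset fun a (ha : _ ∧ _) => ha.1)
  have hnonempty : Nonempty H := by
    obtain ⟨a, ha⟩ := exists_notMem_interior_convexHull P.finite_toSet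
      (convexHull_nonempty_iff.1 (hne.mono interior_subset))
    exact ⟨⟨a, ha⟩⟩
  have hsucc : ∀ a : H, ∃ b : H, IsHullEdge P a.1 b.1 := fun a => by
    obtain ⟨b, hb⟩ := exists_isHullEdge hne a.2.1 a.2.2
    exact ⟨⟨b, hb.right_mem, hb.right_notMem_interior⟩, hb⟩
  choose σ hσ using hsucc
  obtain ⟨m, hm, g, hg, hgσ⟩ := exists_zmod_orbit σ
  have hedge : ∀ i, IsHullEdge P (g i).1 (g (i + 1)).1 := fun i => hgσ i ▸ hσ (g i)
  refine ⟨m, hm, fun i => (g i).1, Subtype.val_injective.comp hg, hedge, fun z hz hz' => ?_⟩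
  obtain ⟨q, hq⟩ := hne
  have hpos : ∀ i, 0 < orient q (g i).1 (g (i + 1)).1 := fun i => by
    rw [← orient_rotate]
    exact (hedge i).orient_pos hq
  obtain ⟨i, hi, hi'⟩ := exists_orient_nonpos_pos hpos (fun h => hz' (h ▸ hq) : z ≠ q)
  have hzt : z ∈ closedTriangle q (g i).1 (g (i + 1)).1 :=
    (mem_closedTriangle_iff_apex (hpos i)).2 ⟨hi, (hedge i).left z hz, hi'.le⟩
  rcases (hedge i).eq_of_mem_closedTriangle hq hz hz' hzt with h | h
  · exact ⟨i, h.symm⟩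
  · exact ⟨i + 1, h.symm⟩

end Hull

section Wheels

/-- The wheel with one hub and `m` rim vertices. -/
def wheel (m : ℕ) : TriFamily (ZMod m) (Fin 1 ⊕ ZMod m) where
  a _ := .inl 0
  b := .inr
  c i := .inr (i + 1)

/-- The triangulated disc with two hubs `p = inl 0`, `q = inl 1` and `m` rim vertices in which `p`
has the four neighbours `q` and `0, 1, 2` on the rim. It arises from the wheel with hub `q` by
placing `p` inside the quadrilateral `q, 0, 1, 2` and joining it to the four corners. -/
def doubleWheel (m : ℕ) : TriFamily (ZMod m ⊕ Fin 2) (Fin 2 ⊕ ZMod m) where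
  a := Sum.elim (fun i => .inl (if i = 0 ∨ i = 1 then 0 else 1)) fun _ => .inl 0
  b := Sum.elim .inr ![.inr 2, .inl 1]
  c := Sum.elim (fun i => .inr (i + 1)) ![.inl 1, .inr 0]

variable {P : Finset Pt} {m : ℕ} {h : ZMod m → Pt} {p q z : Pt}

theorem forall_map_doubleWheel {R : Pt → Pt → Pt → Prop}
    (hp : ∀ i, i = 0 ∨ i = 1 → R p (h i) (h (i + 1)))
    (hq : ∀ i, ¬(i = 0 ∨ i = 1) → R q (h i) (h (i + 1))) (h2 : R p (h 2) q) (h0 : R p q (h 0))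
    (i : ZMod m ⊕ Fin 2) : R (((doubleWheel m).map (Sum.elim ![p, q] h)).a i)
      (((doubleWheel m).map (Sum.elim ![p, q] h)).b i)
      (((doubleWheel m).map (Sum.elim ![p, q] h)).c i) := by
  rcases i with i | i
  · by_cases hi : i = 0 ∨ i = 1
    · simpa [TriFamily.map, doubleWheel, hi] using hp i hi
    · simpa [TriFamily.map, doubleWheel, hi] using hq i hi
  · fin_cases i
    · exact h2
    · exact h0

namespace IsHullCycle

theorem realizes {ι : Type*} {k : ℕ} {t : TriFamily ι (Fin k ⊕ ZMod m)} {c : Fin k → Pt}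
    (hC : IsHullCycle P h) (hc : c.Injective) (hint : ∀ z, InternalPoint P z ↔ z ∈ range c)
    (hM : IsMesh P (t.map (Sum.elim c h))) : t.Realizes P := by
  have hmem : ∀ i, InternalPoint P (c i) := fun i => (hint _).2 (mem_range_self i)
  refine ⟨_, hc.sumElim hC.inj fun i j hij => hC.notMem_interior j (hij ▸ (hmem i).2), ?_, hM⟩
  rw [Sum.elim_range]
  refine (union_subset ?_ ?_).antisymm fun z hz => ?_
  · exact range_subset_iff.2 fun i => (hmem i).1
  · exact range_subset_iff.2 hC.mem
  · by_cases hz' : z ∈ interior (convexHull ℝ (P : Set Pt))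
    · exact .inl ((hint z).1 ⟨hz, hz'⟩)
    · exact .inr (hC.hull z hz hz')

theorem isMesh_wheel [NeZero m] (hC : IsHullCycle P h) (hint : ∀ z, InternalPoint P z ↔ z = q) :
    IsMesh P ((wheel m).map (Sum.elim (fun _ => q) h)) := by
  have hq := (hint q).2 rfl
  refine .of_sum_winding (fun i => ?_) (fun i => hC.orient_pos hq.2 i) (fun i z hz hzt => ?_)
    ⟨q, hq.2⟩ (fun x hx => hC.sum_winding hx q)
  · rintro z (rfl | rfl | rfl)
    exacts [hq.1, hC.mem i, hC.mem (i + 1)]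
  · by_cases hz' : z ∈ interior (convexHull ℝ (P : Set Pt))
    · exact .inl ((hint z).1 ⟨hz, hz'⟩)
    · exact .inr ((hC.edge i).eq_of_mem_closedTriangle hq.2 hz hz' hzt)

theorem eq_zero_or_eq_one_of_mem_closedTriangle (hC : IsHullCycle P h)
    (hq : q ∈ interior (convexHull ℝ (P : Set Pt))) (h0 : orient q p (h 0) < 0)
    (h2 : 0 < orient q p (h 2)) {i : ZMod m} (hp : p ∈ closedTriangle q (h i) (h (i + 1))) :
    i = 0 ∨ i = 1 := by
  have hpq : p ≠ q := by rintro rfl; simp at h0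
  have hunique : ∀ j, orient q p (h j) ≤ 0 → 0 < orient q p (h (j + 1)) → j = 0 ∨ j = 1 := by
    intro j hj hj'
    rcases lt_or_ge 0 (orient q p (h 1)) with h1 | h1
    · exact .inl (hC.eq_of_orient_nonpos_pos ⟨q, hq⟩ hj hj' h0.le (by rwa [zero_add]))
    · exact .inr (hC.eq_of_orient_nonpos_pos ⟨q, hq⟩ hj hj' h1 (by rwa [one_add_one_eq_two]))
  obtain ⟨hi, -, hi'⟩ := (mem_closedTriangle_iff_apex (hC.orient_pos hq i)).1 hp
  rcases hi'.lt_or_eq' with hi' | hi'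
  · exact hunique i hi hi'
  have hneg := hC.orient_mul_orient_neg hq hpq hi'
  have hnext := pos_of_mul_neg_right hneg hi
  rw [← one_add_one_eq_two, ← add_assoc] at hnext
  rcases hunique (i + 1) hi'.le hnext with h | h
  · rw [h] at hi'
    exact absurd hi' h0.ne
  · exact .inl (by simpa using h)

theorem notMem_closedTriangle_of_orient_neg_pos (hC : IsHullCycle P h)
    (hp : p ∈ interior (convexHull ℝ (P : Set Pt))) (h0 : orient q p (h 0) < 0)
    (h2 : 0 < orient q p (h 2)) {i : ZMod m} (hi : i = 0 ∨ i = 1) :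
    q ∉ closedTriangle p (h i) (h (i + 1)) := by
  rw [mem_closedTriangle_iff_apex (hC.orient_pos hp i), orient_swap q p, orient_swap q p]
  rintro ⟨hi₁, -, hi₂⟩
  rcases hi with rfl | rfl
  · linarith
  · rw [one_add_one_eq_two] at hi₂
    linarith

theorem sum_winding_doubleWheel [NeZero m] (h02 : h 0 ≠ h 2) (x : Pt) :
    ∑ i, winding x (((doubleWheel m).map (Sum.elim ![p, q] h)).a i)
      (((doubleWheel m).map (Sum.elim ![p, q] h)).b i)
      (((doubleWheel m).map (Sum.elim ![p, q] h)).c i) =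
    ∑ i, winding x q (h i) (h (i + 1)) := by
  have h01 : (0 : ZMod m) ≠ 1 := by
    refine fun h01 => h02 (congrArg h ?_)
    rw [← one_add_one_eq_two, ← h01, add_zero]
  have hdiff := Fintype.sum_eq_add (0 : ZMod m) 1 h01
    (f := fun i => winding x (if i = 0 ∨ i = 1 then p else q) (h i) (h (i + 1)) -
      winding x q (h i) (h (i + 1))) fun i hi => by simp [hi.1, hi.2]
  have hflip := winding_flip x p q (h 0) (h 1) (h 2)
  have happex : ∀ i : ZMod m, (![p, q] : Fin 2 → Pt) (if i = 0 ∨ i = 1 then 0 else 1) =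
      if i = 0 ∨ i = 1 then p else q := fun i => by split_ifs <;> rfl
  simp only [Finset.sum_sub_distrib, true_or, or_true, if_true, zero_add, one_add_one_eq_two]
    at hdiff
  simp only [TriFamily.map, doubleWheel, Fintype.sum_sum_type, Function.comp_apply, Sum.elim_inl,
    Sum.elim_inr, Fin.sum_univ_two, happex, Matrix.cons_val_zero, Matrix.cons_val_one]
  linarith

theorem eq_of_mem_doubleWheel_cell (hC : IsHullCycle P h)
    (hint : ∀ z, InternalPoint P z ↔ z = p ∨ z = q) (h0 : orient q p (h 0) < 0)
    (h2 : 0 < orient q p (h 2)) (i : ZMod m ⊕ Fin 2) (hz : z ∈ P)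
    (hzt : z ∈ ((doubleWheel m).map (Sum.elim ![p, q] h)).closedCell i) :
    z ∈ ({((doubleWheel m).map (Sum.elim ![p, q] h)).a i,
      ((doubleWheel m).map (Sum.elim ![p, q] h)).b i,
      ((doubleWheel m).map (Sum.elim ![p, q] h)).c i} : Set Pt) := by
  have hp := ((hint p).2 (.inl rfl)).2
  have hq := ((hint q).2 (.inr rfl)).2
  have hconv := convex_convexHull ℝ (P : Set Pt)
  have hhull := fun i => subset_convexHull ℝ _ (hC.mem i)
  have hcase : z ∉ interior (convexHull ℝ (P : Set Pt)) ∨ z = p ∨ z = q :=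
    or_iff_not_imp_left.2 fun hz' => (hint z).1 ⟨hz, not_not.1 hz'⟩
  revert hzt
  refine forall_map_doubleWheel
    (R := fun a b c => z ∈ closedTriangle a b c → z ∈ ({a, b, c} : Set Pt)) ?_ ?_ ?_ ?_ i
  · intro i hi hzt
    rcases hcase with hz' | rfl | rfl
    · exact .inr ((hC.edge i).eq_of_mem_closedTriangle hp hz hz' hzt)
    · exact .inl rfl
    · exact absurd hzt (hC.notMem_closedTriangle_of_orient_neg_pos hp h0 h2 hi)
  · intro i hi hzt
    rcases hcase with hz' | rfl | rfl
    · exact .inr ((hC.edge i).eq_of_mem_closedTriangle hq hz hz' hzt)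
    · exact absurd (hC.eq_zero_or_eq_one_of_mem_closedTriangle hq h0 h2 hzt) hi
    · exact .inl rfl
  · intro hzt
    rcases hcase with hz' | rfl | rfl
    · rw [closedTriangle, pair_comm] at hzt
      simp [eq_of_mem_convexHull_insert hconv hp hq (hhull 2) hzt hz']
    · simp
    · simp
  · intro hzt
    rcases hcase with hz' | rfl | rfl
    · simp [eq_of_mem_convexHull_insert hconv hp hq (hhull 0) hzt hz']
    · simp
    · simp

theorem isMesh_doubleWheel [NeZero m] (hC : IsHullCycle P h)
    (hint : ∀ z, InternalPoint P z ↔ z = p ∨ z = q) (h0 : orient q p (h 0) < 0)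
    (h2 : 0 < orient q p (h 2)) : IsMesh P ((doubleWheel m).map (Sum.elim ![p, q] h)) := by
  have hp := (hint p).2 (.inl rfl)
  have hq := (hint q).2 (.inr rfl)
  have h02 : h 0 ≠ h 2 := fun h02 => (h2.trans_eq (congrArg _ h02.symm)).not_gt h0
  refine .of_sum_winding ?mem ?pos (fun i z => hC.eq_of_mem_doubleWheel_cell hint h0 h2 i)
    ⟨p, hp.2⟩ fun x hx => (sum_winding_doubleWheel h02 x).trans (hC.sum_winding hx q)
  case mem =>
    refine forall_map_doubleWheel (R := fun a b c => {a, b, c} ⊆ (P : Set Pt)) ?_ ?_ ?_ ?_ <;>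
      simp [insert_subset_iff, hp.1, hq.1, hC.mem]
  case pos =>
    refine forall_map_doubleWheel (R := fun a b c => 0 < orient a b c)
      (fun i _ => hC.orient_pos hp.2 i) (fun i _ => hC.orient_pos hq.2 i) ?_ ?_
    · rwa [orient_rotate]
    · rwa [orient_swap, neg_pos]

end IsHullCycle

theorem exists_realizes_wheel (hP : internalCount P = 1) :
    ∃ m, ∃ _ : NeZero m, (wheel m).Realizes P := by
  obtain ⟨q, hq⟩ := ncard_eq_one.1 hP
  have hint : ∀ z, InternalPoint P z ↔ z = q := fun z => Set.ext_iff.1 hq z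
  obtain ⟨m, hm, h, hC⟩ := exists_isHullCycle ⟨q, ((hint q).2 rfl).2⟩
  exact ⟨m, hm, hC.realizes (Function.injective_of_subsingleton _) (by simpa using hint)
    (hC.isMesh_wheel hint)⟩

theorem exists_realizes_doubleWheel (hP : internalCount P = 2) :
    ∃ m, ∃ _ : NeZero m, (doubleWheel m).Realizes P := by
  obtain ⟨p, q, hpq, hset⟩ := ncard_eq_two.1 hP
  have hint : ∀ z, InternalPoint P z ↔ z = p ∨ z = q := fun z => Set.ext_iff.1 hset z
  have hq := ((hint q).2 (.inr rfl)).2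
  obtain ⟨m, hm, h, hC⟩ := exists_isHullCycle ⟨q, hq⟩
  obtain ⟨h', hC', hsign⟩ := hC.exists_rotate_orient_neg_pos hq hpq
  refine ⟨m, hm, ?_⟩
  wlog hside : orient q p (h' 0) < 0 ∧ 0 < orient q p (h' 2) generalizing p q
  · exact this q p hpq.symm (by rwa [pair_comm]) (fun z => (hint z).trans or_comm)
      ((hint p).2 (.inl rfl)).2 hsign.symm (hsign.resolve_left hside)
  exact hC'.realizes (by simpa [Function.Injective, Fin.forall_fin_two, hpq] using hpq.symm)
    (fun z => (hint z).trans (by simp [or_comm]))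
    (hC'.isMesh_doubleWheel hint hside.1 hside.2)

end Wheels

/-- Two point sets of the same size with the same number `k ∈ {1,2}` of
internal points (collinearities allowed) have compatible triangulations. -/
theorem stmt3 (n k : ℕ) (hk : k = 1 ∨ k = 2)
    (P Q : Finset Pt) (hPn : P.card = n) (hQn : Q.card = n)
    (hP : ¬ Collinear ℝ (P : Set Pt)) (hQ : ¬ Collinear ℝ (Q : Set Pt))
    (hPk : internalCount P = k) (hQk : internalCount Q = k) :
    ∃ TP TQ : Set (Sym2 Pt), IsTriangulation P TP ∧ IsTriangulation Q TQ ∧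
      Compatible P Q TP TQ := by
  have hcard : P.card = Q.card := hPn.trans hQn.symm
  rcases hk with rfl | rfl
  · obtain ⟨m, _, hP'⟩ := exists_realizes_wheel hPk
    obtain ⟨m', _, hQ'⟩ := exists_realizes_wheel hQk
    obtain rfl : m = m' := by simpa [hP'.card_eq, hQ'.card_eq] using hcard
    exact hP'.exists_compatible hQ'
  · obtain ⟨m, _, hP'⟩ := exists_realizes_doubleWheel hPk
    obtain ⟨m', _, hQ'⟩ := exists_realizes_doubleWheel hQk
    obtain rfl : m = m' := by simpa [hP'.card_eq, hQ'.card_eq] using hcard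
    exact hP'.exists_compatible hQ'
end

section
/- If T_P is a triangulation of a finite point set P and T_Q is a triangulation of a finite point set Q (each set not contained in a line), and T_P and T_Q are compatible via a bijection φ: P → Q, then for every point p ∈ P, the degree of p in T_P equals the degree of φ(p) in T_Q. -/
open Set

/-!
Every edge of a triangulation of a non-collinear set is a side of a triangle, so the oriented
triangles determine which points are adjacent, and a map respecting oriented triangles respects
adjacency.

The existence of the triangle rests on a visibility argument. Let `C` be a convex pocket with apex
`a` that contains a point of `P` and that no edge crosses from side to side. If the line of sight
from `a` to that point is blocked by an edge at `x`, this edge has an endpoint `u` in the pocket;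
look at `u` instead. The triangle formed by `a`, the blocking point and the endpoint shrinks and
loses a point of `P` at each such rotation, so at last some point of `P` in `C` is visible from `a`,
and by maximality joined to it. For the open half-plane on one side of an edge `ab` this gives an
edge at `a` on that side; let `ac` be the angularly first one. The open triangle `abc` is again a
pocket with apex `a`, so it is empty by the choice of `c`, and then maximality forces `bc` to be an
edge.
-/

section Segment

variable {E : Type*} [AddCommGroup E] [Module ℝ E]

theorem exists_affine_ge_of_mem_convexHull (f : E →ᵃ[ℝ] ℝ) {s : Set E} {y : E}
    (hy : y ∈ convexHull ℝ s) : ∃ w ∈ s, f y ≤ f w :=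
  ((convexOn_id convex_univ).comp_affineMap f).exists_ge_of_mem_convexHull (subset_univ s) hy

theorem affine_pos_of_mem_openSegment (f : E →ᵃ[ℝ] ℝ) {x y z : E} (hx : 0 ≤ f x) (hy : 0 < f y)
    (hz : z ∈ openSegment ℝ x y) : 0 < f z := by
  obtain ⟨s, t, hs, ht, hst, rfl⟩ := hz
  rw [Convex.combo_affine_apply hst, smul_eq_mul, smul_eq_mul]
  positivity

theorem exists_eq_zero_of_mem_segment [TopologicalSpace E] [ContinuousAdd E] [ContinuousSMul ℝ E]
    {f : E → ℝ} (hf : Continuous f) {x y : E} (hx : 0 ≤ f x) (hy : f y ≤ 0) :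
    ∃ z ∈ segment ℝ x y, f z = 0 := by
  have hconn : IsPreconnected (segment ℝ x y) := (convex_segment x y).isPreconnected
  exact hconn.intermediate_value (right_mem_segment ℝ x y) (left_mem_segment ℝ x y)
    hf.continuousOn ⟨hy, hx⟩

theorem openSegment_subset_segment_of_mem {x y z : E} (hz : z ∈ segment ℝ x y) :
    openSegment ℝ x z ⊆ segment ℝ x y :=
  (openSegment_subset_segment ℝ x z).trans
    ((convex_segment x y).segment_subset (left_mem_segment ℝ x y) hz)

theorem exists_lineMap_eq_of_not_affineIndependent {a b p : E} (hab : a ≠ b)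
    (h : ¬ AffineIndependent ℝ ![a, b, p]) : ∃ r : ℝ, AffineMap.lineMap a b r = p := by
  rw [affineIndependent_iff_not_collinear_set, not_not] at h
  exact mem_affineSpan_pair_iff_exists_lineMap_eq.1
    (h.mem_affineSpan_of_mem_of_ne (by simp) (by simp) (by simp) hab)

theorem affineIndependent_of_affine_ne_zero {a b c : E} (hab : a ≠ b) {g : E →ᵃ[ℝ] ℝ}
    (ha : g a = 0) (hb : g b = 0) (hc : g c ≠ 0) : AffineIndependent ℝ ![a, b, c] := by
  by_contra h
  obtain ⟨r, rfl⟩ := exists_lineMap_eq_of_not_affineIndependent hab h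
  simp [AffineMap.apply_lineMap, ha, hb] at hc

theorem exists_affineIndependent_of_not_collinear {S : Set E} (hS : ¬ Collinear ℝ S) {a b : E}
    (hab : a ≠ b) : ∃ p ∈ S, AffineIndependent ℝ ![a, b, p] := by
  by_contra! h
  refine hS ((collinear_iff_exists_forall_eq_smul_vadd S).2 ⟨a, b -ᵥ a, fun p hp => ?_⟩)
  obtain ⟨r, rfl⟩ := exists_lineMap_eq_of_not_affineIndependent hab (h p hp)
  exact ⟨r, AffineMap.lineMap_apply a b r⟩

end Segment

section NormedSegment

variable {E : Type*} [NormedAddCommGroup E] [NormedSpace ℝ E]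

theorem isCompact_segment (x y : E) : IsCompact (segment ℝ x y) := by
  rw [← convexHull_pair]
  exact (toFinite {x, y}).isCompact_convexHull ℝ

theorem exists_first_mem_segment {K : Set E} (hK : IsCompact K) {a p : E}
    (ha : a ∉ K) (h : (K ∩ segment ℝ a p).Nonempty) :
    ∃ x ∈ K ∩ segment ℝ a p, Disjoint (openSegment ℝ a x) K := by
  have hcompact : IsCompact (K ∩ segment ℝ a p) := hK.inter_right (isCompact_segment a p).isClosed
  obtain ⟨x, hx, hmin⟩ := hcompact.exists_isMinOn h (f := dist a) (by fun_prop)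
  refine ⟨x, hx, disjoint_left.2 fun y hy hyK => ?_⟩
  have hle : dist a x ≤ dist a y := hmin ⟨hyK, openSegment_subset_segment_of_mem hx.2 hy⟩
  rw [openSegment_eq_image_lineMap] at hy
  obtain ⟨t, ht, rfl⟩ := hy
  rw [dist_left_lineMap, Real.norm_of_nonneg ht.1.le] at hle
  have hpos : 0 < dist a x := dist_pos.2 fun h => ha (h ▸ hx.1)
  exact hle.not_gt (mul_lt_of_lt_one_left hpos ht.2)

end NormedSegment

section AffineBasis

variable {ι : Type*} {E : Type*} [AddCommGroup E] [Module ℝ E]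

theorem affineMap_apply_eq_sum_coord [Fintype ι] (B : AffineBasis ι ℝ E) (f : E →ᵃ[ℝ] ℝ) (y : E) :
    f y = ∑ i, B.coord i y * f (B i) := by
  conv_lhs => rw [← B.affineCombination_coord_eq_self y]
  rw [Finset.map_affineCombination _ _ _ (B.sum_coord_apply_eq_one y),
    Finset.affineCombination_eq_linear_combination _ _ _ (B.sum_coord_apply_eq_one y)]
  rfl

variable [Finite ι]

theorem eq_of_coord_eq_zero (B : AffineBasis ι ℝ E) {i : ι} {y : E}
    (h : ∀ k ≠ i, B.coord k y = 0) : y = B i := by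
  cases nonempty_fintype ι
  have hsum := B.sum_coord_apply_eq_one y
  have hy := B.linear_combination_coord_eq_self y
  rw [Fintype.sum_eq_single i h] at hsum
  rwa [Fintype.sum_eq_single i fun k hk => by rw [h k hk, zero_smul], hsum, one_smul, eq_comm]
    at hy

theorem combo_coord_eq_of_coord_eq_zero (B : AffineBasis ι ℝ E) {i j : ι} (hij : i ≠ j) {y : E}
    (h : ∀ k, k ≠ i ∧ k ≠ j → B.coord k y = 0) :
    B.coord i y + B.coord j y = 1 ∧ B.coord i y • B i + B.coord j y • B j = y := by
  classical
  cases nonempty_fintype ι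
  constructor
  · rw [← Fintype.sum_eq_add i j hij h, B.sum_coord_apply_eq_one]
  · rw [← Fintype.sum_eq_add (f := fun k => B.coord k y • B k) i j hij
      fun k hk => by rw [h k hk, zero_smul], B.linear_combination_coord_eq_self]

theorem mem_segment_of_coord_nonneg (B : AffineBasis ι ℝ E) {i j : ι} (hij : i ≠ j) {y : E}
    (hi : 0 ≤ B.coord i y) (hj : 0 ≤ B.coord j y)
    (h : ∀ k, k ≠ i ∧ k ≠ j → B.coord k y = 0) : y ∈ segment ℝ (B i) (B j) :=
  ⟨_, _, hi, hj, combo_coord_eq_of_coord_eq_zero B hij h⟩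

theorem mem_openSegment_iff_coord (B : AffineBasis ι ℝ E) {i j : ι} (hij : i ≠ j) {y : E} :
    y ∈ openSegment ℝ (B i) (B j) ↔
      0 < B.coord i y ∧ 0 < B.coord j y ∧ ∀ k, k ≠ i ∧ k ≠ j → B.coord k y = 0 := by
  classical
  constructor
  · rintro ⟨s, t, hs, ht, hst, rfl⟩
    simp only [Convex.combo_affine_apply hst]
    refine ⟨by simp [hij, hs], by simp [hij.symm, ht], fun k hk => by simp [hk.1, hk.2]⟩
  · rintro ⟨hi, hj, h⟩
    exact ⟨_, _, hi, hj, combo_coord_eq_of_coord_eq_zero B hij h⟩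

end AffineBasis

section Triangle

variable {E : Type*} [AddCommGroup E] [Module ℝ E] {B : AffineBasis (Fin 3) ℝ E}

theorem range_fin_three {α : Type*} (f : Fin 3 → α) : range f = {f 0, f 1, f 2} := by
  ext; simp [Fin.exists_fin_succ, eq_comm]

theorem mem_convexHull_triangle_iff {y : E} :
    y ∈ convexHull ℝ {B 0, B 1, B 2} ↔ 0 ≤ B.coord 0 y ∧ 0 ≤ B.coord 1 y ∧ 0 ≤ B.coord 2 y := by
  rw [← range_fin_three, B.convexHull_eq_nonneg_coord]
  simp [Fin.forall_fin_succ]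

theorem notMem_convexHull_of_mem_openSegment {d : E} (h : B 1 ∈ openSegment ℝ (B 0) d) :
    d ∉ convexHull ℝ {B 0, B 1, B 2} := by
  have hd : B.coord 0 d < 0 := by
    have hcoord : B.coord 0 (B 1) = 0 := B.coord_apply_ne (by decide)
    obtain ⟨s, t, hs, ht, hst, hB⟩ := h
    rw [← hB, Convex.combo_affine_apply hst, B.coord_apply_eq, smul_eq_mul, smul_eq_mul,
      mul_one] at hcoord
    exact neg_of_mul_neg_right (by linarith) ht.le
  exact fun hmem => hd.not_ge (mem_convexHull_triangle_iff.1 hmem).1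

end Triangle

section NormedTriangle

variable {E : Type*} [NormedAddCommGroup E] [NormedSpace ℝ E] {B : AffineBasis (Fin 3) ℝ E}

theorem exists_mem_side {i j k : Fin 3} (hij : i ≠ j) (hik : i ≠ k) (hjk : j ≠ k)
    {y w : E} (hiy : 0 ≤ B.coord i y) (hjy : 0 < B.coord j y)
    (hky : 0 < B.coord k y) (hiw : 0 < B.coord i w) (hw : B.coord j w ≤ 0 ∨ B.coord k w ≤ 0) :
    ∃ z ∈ segment ℝ y w, 0 < B.coord i z ∧
      (z ∈ segment ℝ (B i) (B j) ∨ z ∈ segment ℝ (B i) (B k)) := by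
  have := B.finiteDimensional
  obtain ⟨z, hz, hmin⟩ : ∃ z ∈ segment ℝ y w, min (B.coord j z) (B.coord k z) = 0 :=
    exists_eq_zero_of_mem_segment
      ((continuous_barycentric_coord B j).min (continuous_barycentric_coord B k))
      (lt_min hjy hky).le (min_le_iff.2 hw)
  obtain ⟨hjz, hkz⟩ : 0 ≤ B.coord j z ∧ 0 ≤ B.coord k z := le_min_iff.1 hmin.ge
  have hiz : 0 < B.coord i z := by
    rw [← insert_endpoints_openSegment] at hz
    rcases hz with rfl | rfl | hz
    · exact absurd hmin (lt_min hjy hky).ne'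
    · exact hiw
    · exact affine_pos_of_mem_openSegment (B.coord i) hiy hiw hz
  refine ⟨z, hz, hiz, ?_⟩
  rcases min_choice (B.coord j z) (B.coord k z) with h | h <;> rw [hmin] at h
  · refine .inr (mem_segment_of_coord_nonneg B hik hiz.le hkz fun l hl => ?_)
    obtain rfl : l = j := by omega
    exact h.symm
  · refine .inl (mem_segment_of_coord_nonneg B hij hiz.le hjz fun l hl => ?_)
    obtain rfl : l = k := by omega
    exact h.symm

end NormedTriangle

section Plane

/-- The affine basis of the plane formed by three affinely independent points. -/
def triangleBasis {a b c : Pt} (h : AffineIndependent ℝ ![a, b, c]) : AffineBasis (Fin 3) ℝ Pt :=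
  ⟨![a, b, c], h, h.affineSpan_eq_top_iff_card_eq_finrank_add_one.2 (by simp)⟩

theorem eq_zero_of_affineIndependent {a b c : Pt} (h : AffineIndependent ℝ ![a, b, c])
    {f : Pt →ᵃ[ℝ] ℝ} (ha : f a = 0) (hb : f b = 0) (hc : f c = 0) : f = 0 := by
  refine AffineMap.ext_on (triangleBasis h).tot ?_
  rintro _ ⟨i, rfl⟩
  fin_cases i
  exacts [ha, hb, hc]

theorem mem_openTriangle_iff_s8 {B : AffineBasis (Fin 3) ℝ Pt} {y : Pt} :
    y ∈ openTriangle (B 0) (B 1) (B 2) ↔ 0 < B.coord 0 y ∧ 0 < B.coord 1 y ∧ 0 < B.coord 2 y := by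
  rw [openTriangle, ← range_fin_three, B.interior_convexHull]
  simp [Fin.forall_fin_succ]

theorem exists_smul_eq_of_det2_eq_zero {u v : Pt} (hu : u ≠ 0) (h : det2 u v = 0) :
    ∃ r : ℝ, v = r • u := by
  obtain ⟨u₁, u₂⟩ := u
  obtain ⟨v₁, v₂⟩ := v
  replace h : u₁ * v₂ = u₂ * v₁ := sub_eq_zero.1 h
  by_cases hu₁ : u₁ = 0
  · have hu₂ : u₂ ≠ 0 := fun h₂ => hu (by rw [hu₁, h₂]; rfl)
    have hv₁ : v₁ = 0 := by simpa [hu₁, hu₂] using h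
    exact ⟨v₂ / u₂, by simp [hu₁, hu₂, hv₁]⟩
  · exact ⟨v₁ / u₁, by simp [hu₁, field]; linarith⟩

theorem det2_ne_zero_of_affineIndependent {a b c : Pt} (h : AffineIndependent ℝ ![a, b, c]) :
    det2 (b - a) (c - a) ≠ 0 := by
  rw [affineIndependent_iff_not_collinear_set] at h
  intro hdet
  obtain ⟨r, hr⟩ := exists_smul_eq_of_det2_eq_zero
    (sub_ne_zero.2 (ne₁₂_of_not_collinear h).symm) hdet
  refine h ((collinear_iff_of_mem (mem_insert a _)).2 ⟨b - a, ?_⟩)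
  rintro p (rfl | rfl | rfl)
  · exact ⟨0, by simp⟩
  · exact ⟨1, by simp⟩
  · exact ⟨r, by simp [← hr]⟩

theorem clockwise_or_clockwise_swap {a b c : Pt} (h : AffineIndependent ℝ ![a, b, c]) :
    Clockwise a b c ∨ Clockwise b a c := by
  have hswap : det2 (a - b) (c - b) = -det2 (b - a) (c - a) := by
    simp only [det2, Prod.fst_sub, Prod.snd_sub]
    ring
  simpa [Clockwise, hswap] using det2_ne_zero_of_affineIndependent h

end Plane

section Edges

/-- The closed segment spanned by an unordered pair; as a convex hull, so that no choice of order
of the endpoints is involved. -/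
def edgeSegment {E : Type*} [AddCommGroup E] [Module ℝ E] (e : Sym2 E) : Set E :=
  convexHull ℝ (e : Set E)

@[simp]
theorem edgeSegment_mk {E : Type*} [AddCommGroup E] [Module ℝ E] (x y : E) :
    edgeSegment s(x, y) = segment ℝ x y := by
  rw [edgeSegment, Sym2.coe_mk, convexHull_pair]

theorem isCompact_edgeSegment {E : Type*} [NormedAddCommGroup E] [NormedSpace ℝ E] (e : Sym2 E) :
    IsCompact (edgeSegment e) := by
  induction e with | _ x y => exact edgeSegment_mk x y ▸ isCompact_segment x y

end Edges

section Triangulation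

variable {P : Finset Pt} {T : Set (Sym2 Pt)}

theorem validSegs_iff : ValidSegs P T ↔ (∀ e ∈ T, (∀ w ∈ e, w ∈ P) ∧ ¬ e.IsDiag) ∧
    T.Pairwise fun e f => edgeSegment e ∩ edgeSegment f ⊆ e := by
  refine and_congr (forall₂_congr fun e he => ?_) ⟨fun h e he f hf hef => ?_, fun h => ?_⟩
  · induction e with | _ a b
    constructor
    · rintro ⟨c, d, hc, hd, hcd, h⟩
      rw [h]
      simp [hc, hd, hcd]
    · rintro ⟨h, hab⟩
      exact ⟨a, b, h a (Sym2.mem_mk_left a b), h b (Sym2.mem_mk_right a b), hab, rfl⟩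
  · induction e with | _ a b
    induction f with | _ c d
    rintro z ⟨hz, hz'⟩
    rw [edgeSegment_mk] at hz hz'
    by_contra hze
    exact h a b c d he hf hef ⟨z, hz, hz', fun hc => hze (Sym2.mem_iff.2 hc.1)⟩
  · rintro a b c d hab hcd hne ⟨z, hz, hz', hcommon⟩
    rw [← edgeSegment_mk] at hz hz'
    exact hcommon ⟨Sym2.mem_iff.1 (h hab hcd hne ⟨hz, hz'⟩),
      Sym2.mem_iff.1 (h hcd hab hne.symm ⟨hz', hz⟩)⟩

theorem ValidSegs.mem_of_mem (h : ValidSegs P T) {e : Sym2 Pt} (he : e ∈ T) {w : Pt}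
    (hw : w ∈ e) : w ∈ P :=
  ((validSegs_iff.1 h).1 e he).1 w hw

theorem ValidSegs.ne (h : ValidSegs P T) {a b : Pt} (hab : s(a, b) ∈ T) : a ≠ b :=
  ((validSegs_iff.1 h).1 _ hab).2

theorem ValidSegs.mem_of_mem_edgeSegment (h : ValidSegs P T) {e f : Sym2 Pt} (he : e ∈ T)
    (hf : f ∈ T) (hef : e ≠ f) {z : Pt} (hze : z ∈ edgeSegment e) (hzf : z ∈ edgeSegment f) :
    z ∈ e :=
  (validSegs_iff.1 h).2 he hf hef ⟨hze, hzf⟩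

theorem ValidSegs.finite (h : ValidSegs P T) : T.Finite :=
  (Finset.finite_toSet P.sym2).subset fun _ he => Finset.mem_sym2_iff.2 fun _ => h.mem_of_mem he

/-- `p` lies on no edge of `T` except as an endpoint. A point of `P` may fail this: in a
triangulation it may lie in the relative interior of an edge, and then has degree `0`. -/
def AvoidsEdgeInteriors (T : Set (Sym2 Pt)) (p : Pt) : Prop :=
  ∀ e ∈ T, p ∈ edgeSegment e → p ∈ e

theorem ValidSegs.avoidsEdgeInteriors (h : ValidSegs P T) {e : Sym2 Pt} (he : e ∈ T) {w : Pt}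
    (hw : w ∈ e) : AvoidsEdgeInteriors T w := by
  intro f hf hwf
  rcases eq_or_ne f e with rfl | hfe
  · exact hw
  · exact h.mem_of_mem_edgeSegment hf he hfe hwf (subset_convexHull ℝ _ hw)

theorem IsTriangulation.mk_mem_of_disjoint (hT : IsTriangulation P T) {p q : Pt} (hp : p ∈ P)
    (hq : q ∈ P) (hpq : p ≠ q) (hpT : AvoidsEdgeInteriors T p) (hqT : AvoidsEdgeInteriors T q)
    (h : ∀ e ∈ T, e ≠ s(p, q) → Disjoint (edgeSegment e) (openSegment ℝ p q)) : s(p, q) ∈ T := by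
  have hinter : ∀ e ∈ T, e ≠ s(p, q) → ∀ z ∈ edgeSegment s(p, q), z ∈ edgeSegment e →
      z ∈ s(p, q) ∧ z ∈ e := by
    intro e he hne z hz hze
    rw [edgeSegment_mk, ← insert_endpoints_openSegment] at hz
    rcases hz with rfl | rfl | hz
    · exact ⟨Sym2.mem_mk_left z q, hpT e he hze⟩
    · exact ⟨Sym2.mem_mk_right p z, hqT e he hze⟩
    · exact (disjoint_left.1 (h e he hne) hze hz).elim
  have hvalid : ValidSegs P (insert s(p, q) T) := by
    obtain ⟨hpts, hpair⟩ := validSegs_iff.1 hT.1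
    refine validSegs_iff.2 ⟨forall_mem_insert.2 ⟨⟨by simp [hp, hq], hpq⟩, hpts⟩, ?_⟩
    refine pairwise_insert.2 ⟨hpair, fun e he hne => ⟨?_, ?_⟩⟩
    · exact fun z hz => (hinter e he hne.symm z hz.1 hz.2).1
    · exact fun z hz => (hinter e he hne.symm z hz.2 hz.1).2
  exact hT.2 _ hvalid (subset_insert _ T) ▸ mem_insert _ T

/-- No edge of `T` meets the open segment from `a` to `x`, so `x` can be seen from `a`. -/
def Visible (T : Set (Sym2 Pt)) (a x : Pt) : Prop :=
  ∀ e ∈ T, Disjoint (edgeSegment e) (openSegment ℝ a x)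

theorem IsTriangulation.mk_mem_of_visible (hT : IsTriangulation P T) {p q : Pt} (hp : p ∈ P)
    (hq : q ∈ P) (hpq : p ≠ q) (hpT : AvoidsEdgeInteriors T p) (hqT : AvoidsEdgeInteriors T q)
    (h : Visible T p q) : s(p, q) ∈ T :=
  hT.mk_mem_of_disjoint hp hq hpq hpT hqT fun e he _ => h e he

/-- Looking from `a` towards `x`, the first edge met is `e`, at the point `x` of its relative
interior. -/
structure Sees (T : Set (Sym2 Pt)) (a x : Pt) (e : Sym2 Pt) : Prop where
  ne : a ≠ x
  visible : Visible T a x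
  mem : e ∈ T
  mem_edgeSegment : x ∈ edgeSegment e
  notMem : x ∉ e

namespace Sees

variable {a x x' u : Pt} {e e' : Sym2 Pt}

theorem one_le_of_lineMap_mem (h : Sees T a x e) {r : ℝ}
    (hr : AffineMap.lineMap a x r ∈ edgeSegment e) : 1 ≤ r := by
  by_contra! hlt
  have hconvex : Convex ℝ (AffineMap.lineMap a x ⁻¹' edgeSegment e : Set ℝ) :=
    (convex_convexHull ℝ _).affine_preimage _
  have h1 : (1 : ℝ) ∈ (AffineMap.lineMap a x ⁻¹' edgeSegment e : Set ℝ) := by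
    simpa using h.mem_edgeSegment
  obtain ⟨t, ht, ht1⟩ := exists_between (max_lt hlt one_pos)
  obtain ⟨hrt, ht0⟩ := max_lt_iff.1 ht
  exact disjoint_left.1 (h.visible e h.mem) (hconvex.ordConnected.out hr h1 ⟨hrt.le, ht1.le⟩)
    (lineMap_mem_openSegment ℝ a x ⟨ht0, ht1⟩)

-- A collinear endpoint `w` would lie beyond `x`, so the other endpoint would come before `x`.
theorem affineIndependent (h : Sees T a x e) {w : Pt} (hw : w ∈ e) :
    AffineIndependent ℝ ![a, x, w] := by
  by_contra hdep
  obtain ⟨r, rfl⟩ := exists_lineMap_eq_of_not_affineIndependent h.ne hdep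
  obtain ⟨v, rfl⟩ := hw
  have hr1 : r ≠ 1 := by
    rintro rfl
    exact h.notMem (by simp)
  have hr : 1 < r := (h.one_le_of_lineMap_mem (by simp [left_mem_segment])).lt_of_ne' hr1
  have hx := h.mem_edgeSegment
  rw [edgeSegment_mk, ← insert_endpoints_openSegment] at hx
  rcases hx with hx | hx | ⟨s, t, hs, ht, hst, hx⟩
  · exact h.notMem (Sym2.mem_iff.2 (.inl hx))
  · exact h.notMem (Sym2.mem_iff.2 (.inr hx))
  have hv : AffineMap.lineMap a x (1 - s * (r - 1) / t) = v := by
    have hvx : v = t⁻¹ • (x - s • AffineMap.lineMap a x r) := by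
      rw [eq_inv_smul_iff₀ ht.ne', eq_sub_iff_add_eq', hx]
    rw [hvx, AffineMap.lineMap_apply_module', AffineMap.lineMap_apply_module']
    obtain rfl : s = 1 - t := by linarith
    match_scalars <;> field_simp <;> ring
  have hr' : 1 ≤ 1 - s * (r - 1) / t := h.one_le_of_lineMap_mem (by simp [hv, right_mem_segment])
  have hpos : 0 < s * (r - 1) / t := div_pos (mul_pos hs (sub_pos.2 hr)) ht
  linarith

theorem notMem_segment (hT : ValidSegs P T) (h : Sees T a x e) (hu : u ∈ e) {f : Sym2 Pt}
    (hf : f ∈ T) (hfe : f ≠ e) {z : Pt} (hz : z ∈ edgeSegment f) (hzu : z ≠ u) :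
    z ∉ segment ℝ x u := fun hzxu => by
  have hze : z ∈ e := hT.mem_of_mem_edgeSegment h.mem hf hfe.symm
    ((convex_convexHull ℝ _).segment_subset h.mem_edgeSegment (subset_convexHull ℝ _ hu) hzxu) hz
  obtain rfl : e = s(z, u) := (Sym2.mem_and_mem_iff hzu).1 ⟨hze, hu⟩
  have hxz : x = z := (wbtw_swap_left_iff ℝ u).1
    ⟨mem_segment_iff_wbtw.1 hzxu, mem_segment_iff_wbtw.1 (edgeSegment_mk z u ▸ h.mem_edgeSegment)⟩
  exact h.notMem (hxz ▸ hze)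

theorem exists_mem_convexHull (hT : ValidSegs P T) {B : AffineBasis (Fin 3) ℝ Pt}
    (h : Sees T (B 0) (B 1) e) (hu : B 2 ∈ e) (h' : Sees T (B 0) x' e')
    (hx' : x' ∈ openSegment ℝ (B 0) (B 2)) :
    ∃ w ∈ e', w ∈ convexHull ℝ {B 0, B 1, B 2} := by
  obtain ⟨hx'0, hx'1, hx'2⟩ : 0 < B.coord 0 x' ∧ B.coord 1 x' = 0 ∧ 0 < B.coord 2 x' := by
    obtain ⟨h0, h2, hcoord⟩ := (mem_openSegment_iff_coord B (by decide)).1 hx'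
    exact ⟨h0, hcoord 1 (by decide), h2⟩
  have hne : ∀ w ∈ e', B.coord 1 w ≠ 0 := fun w hw hw1 => by
    have hzero : B.coord 1 = 0 :=
      eq_zero_of_affineIndependent (h'.affineIndependent hw) (by simp) hx'1 hw1
    simpa [hzero] using B.coord_apply_eq 1
  have hee' : e' ≠ e := by
    rintro rfl
    exact hne _ hu (by simp)
  obtain ⟨w, hw, hw1⟩ := exists_affine_ge_of_mem_convexHull (B.coord 1) h'.mem_edgeSegment
  replace hw1 : 0 < B.coord 1 w := (hx'1 ▸ hw1).lt_of_ne' (hne w hw)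
  refine ⟨w, hw, ?_⟩
  by_contra hout
  rw [mem_convexHull_triangle_iff] at hout
  obtain ⟨z, hz, hz1, hside⟩ := exists_mem_side (i := 1) (j := 0) (k := 2) (by decide) (by decide)
    (by decide) hx'1.ge hx'0 hx'2 hw1 (by grind)
  have hze' : z ∈ edgeSegment e' :=
    (convex_convexHull ℝ _).segment_subset h'.mem_edgeSegment (subset_convexHull ℝ _ hw) hz
  have hne_of_coord : ∀ i ≠ 1, z ≠ B i := by
    rintro i hi rfl
    simp [B.coord_apply_ne hi.symm] at hz1
  have hzxu : z ∉ segment ℝ (B 1) (B 2) :=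
    h.notMem_segment hT hu h'.mem hee' hze' (hne_of_coord 2 (by decide))
  rcases hside with hside | hside
  · rw [segment_symm, ← insert_endpoints_openSegment] at hside
    rcases hside with hz0 | rfl | hz
    · exact hne_of_coord 0 (by decide) hz0
    · exact hzxu (left_mem_segment ℝ _ _)
    · exact disjoint_left.1 (h.visible e' h'.mem) hze' hz
  · exact hzxu hside

end Sees

/-- A convex region with apex `a` which no edge of `T` crosses from side to side: every edge
meeting `C` has an endpoint in `C`. The apex itself is excluded. -/
structure IsPocket (T : Set (Sym2 Pt)) (a : Pt) (C : Set Pt) : Prop where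
  convex : Convex ℝ C
  openSegment_subset : ∀ y ∈ C, openSegment ℝ a y ⊆ C
  notMem : a ∉ C
  exists_mem : ∀ e ∈ T, ∀ y ∈ edgeSegment e, y ∈ C → ∃ w ∈ e, w ∈ C

/-- The union of the edges of `T` that meet `C`. -/
def blockers (T : Set (Sym2 Pt)) (C : Set Pt) : Set Pt :=
  ⋃ e ∈ {e ∈ T | (edgeSegment e ∩ C).Nonempty}, edgeSegment e

theorem ValidSegs.isCompact_blockers (h : ValidSegs P T) (C : Set Pt) :
    IsCompact (blockers T C) :=
  (h.finite.subset (sep_subset _ _)).isCompact_biUnion fun e _ => isCompact_edgeSegment e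

namespace IsPocket

variable {a : Pt} {C : Set Pt}

theorem mem_of_mem_segment (hC : IsPocket T a C) {x y : Pt} (hy : y ∈ C)
    (hx : x ∈ segment ℝ a y) (hxa : x ≠ a) : x ∈ C := by
  rw [← insert_endpoints_openSegment] at hx
  rcases hx with rfl | rfl | hx
  · exact absurd rfl hxa
  · exact hy
  · exact hC.openSegment_subset y hy hx

theorem mem_of_mem_convexHull (hC : IsPocket T a C) {x y w : Pt} (hx : x ∈ C) (hy : y ∈ C)
    (hw : w ∈ convexHull ℝ {a, x, y}) (hwa : w ≠ a) : w ∈ C := by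
  rw [convexHull_insert ⟨x, mem_insert x _⟩, convexHull_pair, mem_convexJoin] at hw
  obtain ⟨_, rfl, z, hz, hw⟩ := hw
  exact hC.mem_of_mem_segment (hC.convex.segment_subset hx hy hz) hw hwa

theorem exists_mk_mem_of_mem_edgeSegment (hC : IsPocket T a C) (haT : AvoidsEdgeInteriors T a)
    {e : Sym2 Pt} (he : e ∈ T) (ha : a ∈ edgeSegment e) {y : Pt} (hye : y ∈ edgeSegment e)
    (hy : y ∈ C) : ∃ d ∈ C, s(a, d) ∈ T := by
  obtain ⟨d, hde, hd⟩ := hC.exists_mem e he y hye hy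
  have had : a ≠ d := fun h => hC.notMem (h ▸ hd)
  exact ⟨d, hd, (Sym2.mem_and_mem_iff had).1 ⟨haT e he ha, hde⟩ ▸ he⟩

theorem visible_of_disjoint_blockers (hC : IsPocket T a C) {x : Pt} (hx : x ∈ C)
    (h : Disjoint (openSegment ℝ a x) (blockers T C)) : Visible T a x :=
  fun e he => disjoint_left.2 fun y hye hy => disjoint_left.1 h hy
    (mem_biUnion (x := e) ⟨he, y, hye, hC.openSegment_subset x hx hy⟩ hye)

theorem exists_mk_mem_or_sees (hT : IsTriangulation P T) (hC : IsPocket T a C) (ha : a ∈ P)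
    (haT : AvoidsEdgeInteriors T a) {p : Pt} (hp : p ∈ P) (hpC : p ∈ C)
    (hpT : AvoidsEdgeInteriors T p) :
    (∃ d ∈ C, s(a, d) ∈ T) ∨ ∃ x ∈ openSegment ℝ a p, ∃ e, Sees T a x e := by
  refine or_iff_not_imp_left.2 fun hno => ?_
  have ha_blockers : a ∉ blockers T C := by
    intro haK
    obtain ⟨e, ⟨he, y, hye, hy⟩, hae⟩ := mem_iUnion₂.1 haK
    exact hno (hC.exists_mk_mem_of_mem_edgeSegment haT he hae hye hy)
  have not_visible : ∀ x ∈ P, x ∈ C → AvoidsEdgeInteriors T x → ¬ Visible T a x :=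
    fun x hx hxC hxT hvis => hno ⟨x, hxC,
      hT.mk_mem_of_visible ha hx (fun h => hC.notMem (h ▸ hxC)) haT hxT hvis⟩
  have hmeet : (blockers T C ∩ segment ℝ a p).Nonempty := by
    by_contra hempty
    refine not_visible p hp hpC hpT (hC.visible_of_disjoint_blockers hpC ?_)
    exact disjoint_left.2 fun y hy hyK => hempty ⟨y, hyK, openSegment_subset_segment ℝ a p hy⟩
  obtain ⟨x, ⟨hxK, hx⟩, hdisj⟩ :=
    exists_first_mem_segment (hT.1.isCompact_blockers C) ha_blockers hmeet
  have hax : a ≠ x := fun h => ha_blockers (h ▸ hxK)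
  have hxC : x ∈ C := hC.mem_of_mem_segment hpC hx hax.symm
  have hvis : Visible T a x := hC.visible_of_disjoint_blockers hxC hdisj
  obtain ⟨e, ⟨he, -⟩, hxe⟩ := mem_iUnion₂.1 hxK
  have hx_notMem : x ∉ e := fun h =>
    not_visible x (hT.1.mem_of_mem he h) hxC (hT.1.avoidsEdgeInteriors he h) hvis
  refine ⟨x, ?_, e, hax, hvis, he, hxe, hx_notMem⟩
  rw [← insert_endpoints_openSegment] at hx
  rcases hx with rfl | rfl | hx
  · exact absurd rfl hax
  · exact absurd (hpT e he hxe) hx_notMem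
  · exact hx

-- Rotate the line of sight from `x` towards `u`: the new triangle is nested in the old one and
-- loses the vertex `u`, which lies behind `x'`.
theorem exists_sees_of_sees (hT : IsTriangulation P T) (hC : IsPocket T a C) (ha : a ∈ P)
    (haT : AvoidsEdgeInteriors T a) (hno : ¬ ∃ d ∈ C, s(a, d) ∈ T) {x u : Pt} {e : Sym2 Pt}
    (h : Sees T a x e) (hx : x ∈ C) (hue : u ∈ e) (hu : u ∈ C) :
    ∃ x' ∈ C, ∃ e', Sees T a x' e' ∧ ∃ u' ∈ e', u' ∈ C ∧
      convexHull ℝ {a, x', u'} ⊆ convexHull ℝ {a, x, u} ∧ u ∉ convexHull ℝ {a, x', u'} := by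
  obtain ⟨x', hx', e', h'⟩ := (exists_mk_mem_or_sees hT hC ha haT (hT.1.mem_of_mem h.mem hue) hu
    (hT.1.avoidsEdgeInteriors h.mem hue)).resolve_left hno
  obtain ⟨u', hu'e', hu'⟩ : ∃ u' ∈ e', u' ∈ convexHull ℝ {a, x, u} :=
    Sees.exists_mem_convexHull (B := triangleBasis (h.affineIndependent hue)) hT.1 h hue h' hx'
  have hindep : AffineIndependent ℝ ![a, x', u'] := h'.affineIndependent hu'e'
  have hu'a : u' ≠ a :=
    (ne₁₃_of_not_collinear (affineIndependent_iff_not_collinear_set.1 hindep)).symm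
  refine ⟨x', hC.openSegment_subset u hu hx', e', h', u', hu'e',
    hC.mem_of_mem_convexHull hx hu hu' hu'a, convexHull_min ?_ (convex_convexHull ℝ _),
    notMem_convexHull_of_mem_openSegment (B := triangleBasis hindep) hx'⟩
  have hx'mem : x' ∈ convexHull ℝ {a, x, u} := segment_subset_convexHull (by simp) (by simp)
    (openSegment_subset_segment ℝ a u hx')
  rintro y (rfl | rfl | rfl)
  · exact subset_convexHull ℝ _ (by simp)
  · exact hx'mem
  · exact hu'

theorem not_sees (hT : IsTriangulation P T) (hC : IsPocket T a C) (ha : a ∈ P)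
    (haT : AvoidsEdgeInteriors T a) (hno : ¬ ∃ d ∈ C, s(a, d) ∈ T) {x u : Pt} {e : Sym2 Pt}
    (hx : x ∈ C) (hue : u ∈ e) (hu : u ∈ C) : ¬ Sees T a x e := by
  intro h
  induction hn : (↑P ∩ convexHull ℝ {a, x, u}).ncard using Nat.strong_induction_on
    generalizing x e u with | _ n ih
  obtain ⟨x', hx', e', h', u', hu'e', hu', hsub, hnotMem⟩ :=
    exists_sees_of_sees hT hC ha haT hno h hx hue hu
  refine ih _ (hn ▸ ncard_lt_ncard ?_ (P.finite_toSet.inter_of_left _)) hx' hu'e' hu' h' rfl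
  refine ⟨inter_subset_inter_right _ hsub, fun hsup => hnotMem (hsup ⟨?_, ?_⟩).2⟩
  · exact hT.1.mem_of_mem h.mem hue
  · exact subset_convexHull ℝ _ (by simp)

theorem exists_mk_mem (hT : IsTriangulation P T) (hC : IsPocket T a C) (ha : a ∈ P)
    (haT : AvoidsEdgeInteriors T a) {p : Pt} (hp : p ∈ P) (hpC : p ∈ C) :
    ∃ d ∈ C, s(a, d) ∈ T := by
  by_contra hno
  obtain ⟨q, hq, hqC, hqT⟩ : ∃ q ∈ P, q ∈ C ∧ AvoidsEdgeInteriors T q := by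
    by_cases hpT : AvoidsEdgeInteriors T p
    · exact ⟨p, hp, hpC, hpT⟩
    · simp only [AvoidsEdgeInteriors, not_forall] at hpT
      obtain ⟨e, he, hpe, -⟩ := hpT
      obtain ⟨w, hwe, hwC⟩ := hC.exists_mem e he p hpe hpC
      exact ⟨w, hT.1.mem_of_mem he hwe, hwC, hT.1.avoidsEdgeInteriors he hwe⟩
  obtain ⟨x, hx, e, h⟩ := (exists_mk_mem_or_sees hT hC ha haT hq hqC hqT).resolve_left hno
  have hxC : x ∈ C := hC.openSegment_subset q hqC hx
  obtain ⟨u, hue, hu⟩ := hC.exists_mem e h.mem x h.mem_edgeSegment hxC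
  exact not_sees hT hC ha haT hno hxC hue hu h

end IsPocket

theorem isPocket_halfPlane {a : Pt} {g : Pt →ᵃ[ℝ] ℝ} (hga : g a = 0) :
    IsPocket T a {y | 0 < g y} where
  convex := (convex_Ioi 0).affine_preimage g
  openSegment_subset _ hy _ hz := affine_pos_of_mem_openSegment g hga.ge hy hz
  notMem := hga.not_gt
  exists_mem e _ y hye hy := by
    obtain ⟨w, hw, hyw⟩ := exists_affine_ge_of_mem_convexHull g hye
    exact ⟨w, hw, hy.trans_le hyw⟩

/-- The edges `B 0 B 1` and `B 0 B 2` of `T` are angularly consecutive at `B 0`: no edge at `B 0`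
points into the open sector between them, which in coordinates is `0 < coord 1, 0 < coord 2`. -/
structure IsEmptySector (T : Set (Sym2 Pt)) (B : AffineBasis (Fin 3) ℝ Pt) : Prop where
  mem₁ : s(B 0, B 1) ∈ T
  mem₂ : s(B 0, B 2) ∈ T
  notMem : ∀ v, 0 < B.coord 1 v → 0 < B.coord 2 v → s(B 0, v) ∉ T

theorem IsTriangulation.exists_mk_mem_of_pos (hT : IsTriangulation P T) {a b p : Pt}
    (hab : s(a, b) ∈ T) {g : Pt →ᵃ[ℝ] ℝ} (hga : g a = 0) (hp : p ∈ P) (hgp : 0 < g p) :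
    ∃ v, s(a, v) ∈ T ∧ 0 < g v := by
  have ha : a ∈ s(a, b) := Sym2.mem_mk_left a b
  obtain ⟨v, hgv, hv⟩ := (isPocket_halfPlane hga).exists_mk_mem hT (hT.1.mem_of_mem hab ha)
    (hT.1.avoidsEdgeInteriors hab ha) hp hgp
  exact ⟨v, hv, hgv⟩

-- The third vertex `c` is the angularly first neighbor of `a` on the side of `p`, starting from
-- `b`: in the oblique coordinates `f` along `ab`, `g` along `ap`, it maximizes the slope `f / g`.
theorem IsTriangulation.exists_isEmptySector (hT : IsTriangulation P T) {a b p : Pt}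
    (hab : s(a, b) ∈ T) (hp : p ∈ P) (h : AffineIndependent ℝ ![a, b, p]) :
    ∃ B : AffineBasis (Fin 3) ℝ Pt, B 0 = a ∧ B 1 = b ∧ IsEmptySector T B := by
  let f : Pt →ᵃ[ℝ] ℝ := (triangleBasis h).coord 1
  let g : Pt →ᵃ[ℝ] ℝ := (triangleBasis h).coord 2
  obtain ⟨hfa, hfb⟩ : f a = 0 ∧ f b = 1 :=
    ⟨(triangleBasis h).coord_apply_ne (j := 0) (by decide), (triangleBasis h).coord_apply_eq 1⟩
  obtain ⟨hga, hgb, hgp⟩ : g a = 0 ∧ g b = 0 ∧ g p = 1 :=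
    ⟨(triangleBasis h).coord_apply_ne (j := 0) (by decide),
      (triangleBasis h).coord_apply_ne (j := 1) (by decide), (triangleBasis h).coord_apply_eq 2⟩
  let V : Set Pt := {v | s(a, v) ∈ T ∧ 0 < g v}
  have hV : V.Finite := P.finite_toSet.subset fun v hv =>
    hT.1.mem_of_mem hv.1 (Sym2.mem_mk_right a v)
  obtain ⟨c, ⟨hac, hgc⟩, hmax⟩ := V.exists_max_image (fun v => f v / g v) hV
    (hT.exists_mk_mem_of_pos hab hga hp (hgp ▸ one_pos))
  let B : AffineBasis (Fin 3) ℝ Pt := triangleBasis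
    (affineIndependent_of_affine_ne_zero (hT.1.ne hab) hga hgb hgc.ne')
  refine ⟨B, rfl, rfl, hab, hac, fun v hv₁ hv₂ hv => ?_⟩
  obtain ⟨hBa, hBb, hBc⟩ : B 0 = a ∧ B 1 = b ∧ B 2 = c := ⟨rfl, rfl, rfl⟩
  have hfv : f v = B.coord 1 v + B.coord 2 v * f c := by
    simp [affineMap_apply_eq_sum_coord B f v, Fin.sum_univ_three, hBa, hBb, hBc, hfa, hfb]
  have hgv : g v = B.coord 2 v * g c := by
    simp [affineMap_apply_eq_sum_coord B g v, Fin.sum_univ_three, hBa, hBb, hBc, hga, hgb]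
  have hgv_pos : 0 < g v := hgv ▸ mul_pos hv₂ hgc
  have hle : f v * g c ≤ f c * g v := (div_le_div_iff₀ hgv_pos hgc).1 (hmax v ⟨hv, hgv_pos⟩)
  rw [hfv, hgv] at hle
  linarith [mul_pos hv₁ hgc]

namespace IsEmptySector

variable {B : AffineBasis (Fin 3) ℝ Pt} {e : Sym2 Pt} {y w : Pt}

theorem notMem_edgeSegment (hT : ValidSegs P T) (h : IsEmptySector T B) (he : e ∈ T)
    (hy : y ∈ edgeSegment e) (hy₁ : 0 < B.coord 1 y) (hy₂ : 0 < B.coord 2 y) :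
    B 0 ∉ edgeSegment e := by
  intro h0
  obtain ⟨v, rfl⟩ : B 0 ∈ e :=
    hT.avoidsEdgeInteriors h.mem₁ (Sym2.mem_mk_left (B 0) (B 1)) e he h0
  have hv : ∀ i ≠ 0, 0 < B.coord i y → 0 < B.coord i v := by
    intro i hi hiy
    by_contra! hiv
    obtain ⟨w, hw, hyw⟩ := exists_affine_ge_of_mem_convexHull (B.coord i) hy
    rcases Sym2.mem_iff.1 hw with rfl | rfl
    · exact (hiy.trans_le hyw).ne' (B.coord_apply_ne hi)
    · exact (hiy.trans_le hyw).not_ge hiv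
  exact h.notMem v (hv 1 (by decide) hy₁) (hv 2 (by decide) hy₂) he

theorem mem_openTriangle_of_coord_zero_pos (hT : ValidSegs P T) (h : IsEmptySector T B) (he : e ∈ T)
    (hy : y ∈ edgeSegment e) (hy₀ : 0 ≤ B.coord 0 y) (hy₁ : 0 < B.coord 1 y)
    (hy₂ : 0 < B.coord 2 y) (hw : w ∈ e) (hw₀ : 0 < B.coord 0 w) :
    w ∈ openTriangle (B 0) (B 1) (B 2) := by
  by_contra hout
  rw [mem_openTriangle_iff_s8] at hout
  obtain ⟨z, hz, hz₀, hside⟩ := exists_mem_side (i := 0) (j := 1) (k := 2) (by decide) (by decide)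
    (by decide) hy₀ hy₁ hy₂ hw₀ (by grind)
  have hze : z ∈ edgeSegment e :=
    (convex_convexHull ℝ _).segment_subset hy (subset_convexHull ℝ _ hw) hz
  have hz_notMem : ∀ j ≠ 0, s(B 0, B j) ∈ T → z ∉ segment ℝ (B 0) (B j) := by
    intro j hj hjT hzj
    refine h.notMem_edgeSegment hT he hy hy₁ hy₂ ?_
    by_cases hej : s(B 0, B j) = e
    · exact hej ▸ subset_convexHull ℝ _ (Sym2.mem_mk_left (B 0) (B j))
    have hz_mem : z ∈ s(B 0, B j) :=
      hT.mem_of_mem_edgeSegment hjT he hej (edgeSegment_mk (B 0) (B j) ▸ hzj) hze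
    rcases Sym2.mem_iff.1 hz_mem with rfl | rfl
    · exact hze
    · exact absurd (B.coord_apply_ne hj.symm) hz₀.ne'
  exact hside.elim (hz_notMem 1 (by decide) h.mem₁) (hz_notMem 2 (by decide) h.mem₂)

theorem isPocket_openTriangle (hT : ValidSegs P T) (h : IsEmptySector T B) :
    IsPocket T (B 0) (openTriangle (B 0) (B 1) (B 2)) where
  convex := (convex_convexHull ℝ _).interior
  openSegment_subset y hy z hz := by
    rw [mem_openTriangle_iff_s8] at hy ⊢
    exact ⟨affine_pos_of_mem_openSegment _ (by simp) hy.1 hz,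
      affine_pos_of_mem_openSegment _ (by simp) hy.2.1 hz,
      affine_pos_of_mem_openSegment _ (by simp) hy.2.2 hz⟩
  notMem := by simp [mem_openTriangle_iff_s8]
  exists_mem e he y hye hy := by
    obtain ⟨hy₀, hy₁, hy₂⟩ := mem_openTriangle_iff_s8.1 hy
    obtain ⟨w, hw, hyw⟩ := exists_affine_ge_of_mem_convexHull (B.coord 0) hye
    exact ⟨w, hw, h.mem_openTriangle_of_coord_zero_pos hT he hye hy₀.le hy₁ hy₂ hw
      (hy₀.trans_le hyw)⟩

theorem notMem_openTriangle (hT : IsTriangulation P T) (h : IsEmptySector T B) {p : Pt}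
    (hp : p ∈ P) : p ∉ openTriangle (B 0) (B 1) (B 2) := by
  intro hpB
  have h0 : B 0 ∈ s(B 0, B 1) := Sym2.mem_mk_left (B 0) (B 1)
  obtain ⟨d, hd, hdT⟩ := (h.isPocket_openTriangle hT.1).exists_mk_mem hT
    (hT.1.mem_of_mem h.mem₁ h0) (hT.1.avoidsEdgeInteriors h.mem₁ h0) hp hpB
  obtain ⟨-, hd₁, hd₂⟩ := mem_openTriangle_iff_s8.1 hd
  exact h.notMem d hd₁ hd₂ hdT

theorem disjoint_openTriangle (hT : IsTriangulation P T) (h : IsEmptySector T B) (he : e ∈ T) :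
    Disjoint (edgeSegment e) (openTriangle (B 0) (B 1) (B 2)) := by
  refine disjoint_left.2 fun y hye hy => ?_
  obtain ⟨w, hwe, hw⟩ := (h.isPocket_openTriangle hT.1).exists_mem e he y hye hy
  exact h.notMem_openTriangle hT (hT.1.mem_of_mem he hwe) hw

theorem notMem_of_mem_openSegment (hT : IsTriangulation P T) (h : IsEmptySector T B) (he : e ∈ T)
    (hy : y ∈ openSegment ℝ (B 1) (B 2)) : y ∉ e := by
  intro hye
  obtain ⟨hy₀, hy₁, hy₂⟩ : B.coord 0 y = 0 ∧ 0 < B.coord 1 y ∧ 0 < B.coord 2 y := by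
    obtain ⟨h1, h2, hcoord⟩ := (mem_openSegment_iff_coord B (by decide)).1 hy
    exact ⟨hcoord 0 (by decide), h1, h2⟩
  have hsub : openSegment ℝ (B 0) y ⊆ openTriangle (B 0) (B 1) (B 2) := by
    intro z hz
    refine mem_openTriangle_iff_s8.2 ⟨affine_pos_of_mem_openSegment _ hy₀.ge (by simp)
      (openSegment_symm ℝ (B 0) y ▸ hz), affine_pos_of_mem_openSegment _ (by simp) hy₁ hz,
      affine_pos_of_mem_openSegment _ (by simp) hy₂ hz⟩
  have h0 : B 0 ∈ s(B 0, B 1) := Sym2.mem_mk_left (B 0) (B 1)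
  have hne : B 0 ≠ y := fun hy' => by simp [← hy'] at hy₀
  exact h.notMem y hy₁ hy₂ (hT.mk_mem_of_visible (hT.1.mem_of_mem h.mem₁ h0)
    (hT.1.mem_of_mem he hye) hne (hT.1.avoidsEdgeInteriors h.mem₁ h0)
    (hT.1.avoidsEdgeInteriors he hye)
    fun f hf => (h.disjoint_openTriangle hT hf).mono_right hsub)

theorem coord_zero_eq_zero (hT : IsTriangulation P T) (h : IsEmptySector T B) (he : e ∈ T)
    (hye : y ∈ edgeSegment e) (hy : y ∈ openSegment ℝ (B 1) (B 2)) (hw : w ∈ e) :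
    B.coord 0 w = 0 := by
  obtain ⟨hy₁, hy₂, hy₀⟩ := (mem_openSegment_iff_coord B (by decide)).1 hy
  replace hy₀ : B.coord 0 y = 0 := hy₀ 0 (by decide)
  have hnonpos : ∀ v ∈ e, B.coord 0 v ≤ 0 := by
    intro v hv
    by_contra! hv₀
    exact h.notMem_openTriangle hT (hT.1.mem_of_mem he hv)
      (h.mem_openTriangle_of_coord_zero_pos hT.1 he hye hy₀.ge hy₁ hy₂ hv hv₀)
  refine (hnonpos w hw).antisymm (not_lt.1 fun hw₀ => ?_)
  obtain ⟨v, rfl⟩ := hw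
  rw [edgeSegment_mk, segment_symm, ← insert_endpoints_openSegment] at hye
  rcases hye with rfl | rfl | hye
  · exact h.notMem_of_mem_openSegment hT he hy (Sym2.mem_mk_right w y)
  · exact hw₀.ne hy₀
  · have hy_neg : 0 < (-B.coord 0) y := affine_pos_of_mem_openSegment (-B.coord 0)
      (neg_nonneg.2 (hnonpos v (Sym2.mem_mk_right w v))) (neg_pos.2 hw₀) hye
    exact (neg_pos.1 hy_neg).ne hy₀

theorem basis_mem_of_mem_edgeSegment (hT : IsTriangulation P T) (h : IsEmptySector T B) (he : e ∈ T)
    (hye : y ∈ edgeSegment e) (hy : y ∈ openSegment ℝ (B 1) (B 2)) {i j : Fin 3} (hi : i ≠ 0)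
    (hj : j ≠ 0) (hij : i ≠ j) (hiT : AvoidsEdgeInteriors T (B i)) : B i ∈ e := by
  have hside : openSegment ℝ (B i) (B j) = openSegment ℝ (B 1) (B 2) := by
    obtain ⟨rfl, rfl⟩ | ⟨rfl, rfl⟩ : i = 1 ∧ j = 2 ∨ i = 2 ∧ j = 1 := by omega
    · rfl
    · exact openSegment_symm ℝ _ _
  obtain ⟨hyi, hyj, -⟩ := (mem_openSegment_iff_coord B hij).1 (hside ▸ hy)
  have hline : ∀ z ∈ edgeSegment e, B.coord 0 z = 0 := convexHull_min
    (fun v hv => h.coord_zero_eq_zero hT he hye hy hv) ((convex_singleton 0).affine_preimage _)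
  obtain ⟨w, hw, hyw⟩ := exists_affine_ge_of_mem_convexHull (B.coord i) hye
  have hw' : w ∈ edgeSegment e := subset_convexHull ℝ _ hw
  have hwj : B.coord j w ≤ 0 := by
    by_contra! hwj
    have hw_side : w ∈ openSegment ℝ (B i) (B j) := by
      refine (mem_openSegment_iff_coord B hij).2 ⟨hyi.trans_le hyw, hwj, fun k hk => ?_⟩
      obtain rfl : k = 0 := by omega
      exact hline w hw'
    exact h.notMem_of_mem_openSegment hT he (hside ▸ hw_side) hw
  obtain ⟨z, hz, hjz⟩ := exists_eq_zero_of_mem_segment (continuous_barycentric_coord B j) hyj.le hwj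
  have hze : z ∈ edgeSegment e := (convex_convexHull ℝ _).segment_subset hye hw' hz
  have hzi : z = B i := by
    refine eq_of_coord_eq_zero B fun k hk => ?_
    obtain rfl | rfl : k = j ∨ k = 0 := by omega
    · exact hjz
    · exact hline z hze
  exact hiT e he (hzi ▸ hze)

theorem mk_mem (hT : IsTriangulation P T) (h : IsEmptySector T B) : s(B 1, B 2) ∈ T := by
  have h1 : B 1 ∈ s(B 0, B 1) := Sym2.mem_mk_right (B 0) (B 1)
  have h2 : B 2 ∈ s(B 0, B 2) := Sym2.mem_mk_right (B 0) (B 2)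
  have h1T : AvoidsEdgeInteriors T (B 1) := hT.1.avoidsEdgeInteriors h.mem₁ h1
  have h2T : AvoidsEdgeInteriors T (B 2) := hT.1.avoidsEdgeInteriors h.mem₂ h2
  have h12 : B 1 ≠ B 2 := B.ind.injective.ne (by decide)
  refine hT.mk_mem_of_disjoint (hT.1.mem_of_mem h.mem₁ h1) (hT.1.mem_of_mem h.mem₂ h2) h12 h1T h2T
    fun e he hne => disjoint_left.2 fun y hye hy => hne ?_
  exact (Sym2.mem_and_mem_iff h12).1
    ⟨h.basis_mem_of_mem_edgeSegment hT he hye hy (j := 2) (by decide) (by decide) (by decide) h1T,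
      h.basis_mem_of_mem_edgeSegment hT he hye hy (j := 1) (by decide) (by decide) (by decide) h2T⟩

theorem isTriangleOf (hT : IsTriangulation P T) (h : IsEmptySector T B) :
    IsTriangleOf P T (B 0) (B 1) (B 2) := by
  have hne {i j : Fin 3} (hij : i ≠ j) : B i ≠ B j := B.ind.injective.ne hij
  refine ⟨hT.1.mem_of_mem h.mem₁ (by simp), hT.1.mem_of_mem h.mem₁ (by simp),
    hT.1.mem_of_mem h.mem₂ (by simp), hne (by decide), hne (by decide), hne (by decide),
    h.mem₁, h.mk_mem hT, h.mem₂, fun p hp => h.notMem_openTriangle hT hp, fun u v huv x hx => ?_⟩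
  rw [← edgeSegment_mk] at hx
  exact disjoint_left.1 (h.disjoint_openTriangle hT huv) hx

end IsEmptySector

theorem IsTriangulation.exists_isTriangleOf (hT : IsTriangulation P T)
    (hP : ¬ Collinear ℝ (P : Set Pt)) {a b : Pt} (hab : s(a, b) ∈ T) :
    ∃ c, IsTriangleOf P T a b c ∧ AffineIndependent ℝ ![a, b, c] := by
  obtain ⟨p, hp, hindep⟩ := exists_affineIndependent_of_not_collinear hP (hT.1.ne hab)
  obtain ⟨B, rfl, rfl, hB⟩ := hT.exists_isEmptySector hab hp hindep
  refine ⟨B 2, hB.isTriangleOf hT, ?_⟩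
  convert B.ind using 1
  ext i : 1
  fin_cases i <;> rfl

theorem IsTriangleOf.swap {a b c : Pt} (h : IsTriangleOf P T a b c) : IsTriangleOf P T b a c := by
  obtain ⟨ha, hb, hc, hab, hbc, hac, habT, hbcT, hacT, hpts, hedges⟩ := h
  have hopen : openTriangle b a c = openTriangle a b c := by
    rw [openTriangle, openTriangle, insert_comm]
  rw [← hopen] at hpts hedges
  exact ⟨hb, ha, hc, hab.symm, hac, hbc, Sym2.eq_swap ▸ habT, hacT, hbcT, hpts, hedges⟩

theorem IsTriangleOf.mem {a b c : Pt} (h : IsTriangleOf P T a b c) : s(a, b) ∈ T :=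
  h.2.2.2.2.2.2.1

theorem IsTriangulation.mk_mem_iff_exists (hT : IsTriangulation P T)
    (hP : ¬ Collinear ℝ (P : Set Pt)) {a b : Pt} :
    s(a, b) ∈ T ↔ ∃ c ∈ P, (IsTriangleOf P T a b c ∧ Clockwise a b c) ∨
      (IsTriangleOf P T b a c ∧ Clockwise b a c) := by
  constructor
  · intro hab
    obtain ⟨c, hc, hindep⟩ := hT.exists_isTriangleOf hP hab
    exact ⟨c, hc.2.2.1, (clockwise_or_clockwise_swap hindep).imp (⟨hc, ·⟩) (⟨hc.swap, ·⟩)⟩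
  · rintro ⟨c, -, h | h⟩
    · exact h.1.mem
    · exact h.1.swap.mem

theorem CompatibleVia.mk_mem_iff {Q : Finset Pt} {TP TQ : Set (Sym2 Pt)} {φ : Pt → Pt}
    (hφ : CompatibleVia P Q TP TQ φ) (hTP : IsTriangulation P TP) (hTQ : IsTriangulation Q TQ)
    (hP : ¬ Collinear ℝ (P : Set Pt)) (hQ : ¬ Collinear ℝ (Q : Set Pt)) {p q : Pt} (hp : p ∈ P)
    (hq : q ∈ P) : s(p, q) ∈ TP ↔ s(φ p, φ q) ∈ TQ := by
  rw [hTP.mk_mem_iff_exists hP, hTQ.mk_mem_iff_exists hQ]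
  refine Iff.trans ?_ hφ.1.exists.symm
  exact exists_congr fun c => and_congr_right fun hc =>
    or_congr (hφ.2 p q c hp hq hc) (hφ.2 q p c hq hp hc)

/-- The points joined to `p` by an edge of `T`. -/
def neighbors (T : Set (Sym2 Pt)) (p : Pt) : Set Pt := {q | s(p, q) ∈ T}

theorem degreeIn_eq_ncard_neighbors (T : Set (Sym2 Pt)) (p : Pt) :
    degreeIn T p = (neighbors T p).ncard := by
  have himage : {e ∈ T | p ∈ e} = (fun q => s(p, q)) '' neighbors T p := by
    ext e
    constructor
    · rintro ⟨he, q, rfl⟩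
      exact ⟨q, he, rfl⟩
    · rintro ⟨q, hq, rfl⟩
      exact ⟨hq, Sym2.mem_mk_left p q⟩
  rw [degreeIn, himage, ncard_image_of_injective _ fun q r => Sym2.congr_right.1]

theorem ValidSegs.neighbors_subset (h : ValidSegs P T) (p : Pt) : neighbors T p ⊆ P :=
  fun q hq => h.mem_of_mem hq (Sym2.mem_mk_right p q)

end Triangulation

/-- Compatible triangulations preserve degrees. -/
theorem stmt8 (P Q : Finset Pt)
    (hP : ¬ Collinear ℝ (P : Set Pt)) (hQ : ¬ Collinear ℝ (Q : Set Pt))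
    (TP TQ : Set (Sym2 Pt)) (hTP : IsTriangulation P TP) (hTQ : IsTriangulation Q TQ)
    (φ : Pt → Pt) (hcomp : CompatibleVia P Q TP TQ φ) :
    ∀ p ∈ P, degreeIn TP p = degreeIn TQ (φ p) := by
  intro p hp
  have hP_sub : neighbors TP p ⊆ P := hTP.1.neighbors_subset p
  have hQ_sub : neighbors TQ (φ p) ⊆ Q := hTQ.1.neighbors_subset (φ p)
  have himage : φ '' neighbors TP p = neighbors TQ (φ p) := by
    refine Subset.antisymm (image_subset_iff.2 fun q hq => ?_) fun r hr => ?_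
    · exact (hcomp.mk_mem_iff hTP hTQ hP hQ hp (hP_sub hq)).1 hq
    · obtain ⟨q, hq, rfl⟩ := hcomp.1.surjOn (hQ_sub hr)
      exact ⟨q, (hcomp.mk_mem_iff hTP hTQ hP hQ hp hq).2 hr, rfl⟩
  rw [degreeIn_eq_ncard_neighbors, degreeIn_eq_ncard_neighbors, ← himage,
    (hcomp.1.injOn.mono hP_sub).ncard_image]
end
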